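/- arXiv:2011.05709 — 6 statements merged into one kernel-verified Lean document; each statement's English description precedes it below -/
import Mathlib

section
/- Let c > 0, q ∈ (1/2, 1), β > 0 and a ∈ ℂ. Let F : ℝ → ℂ be bounded and measurable with lim_{k→−∞} (−k)^β F(k) = a. Then lim_{n→∞} n^β · (2cn)^{−1/2} ∫_{−n−n^q}^{−n+n^q} F(k) e^{−(k+n)²/(4cn)} dk = √(2π) · a. -/
open MeasureTheory Filter Topology

/-!
Put `s = √(2ct)`. The substitution `k = -t + s x` turns the window average into
`∫ exp(-x²/2) t^β F(-t + s x) dx` over `|x| ≤ t^q / s`. As `q > 1/2`, this domain exhausts the line,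
whereas `k` stays comparable to `-t` because `q < 1`. Writing
`t^β F(k) = (-k/t)^(-β) · (-k)^β F(k)`, the first factor is bounded on the window and tends to `1`
for fixed `x`, while the second is eventually bounded and tends to `a`. Dominated convergence then
gives the limit `(∫ exp(-x²/2) dx) a`.
-/

section Integration

variable {E : Type*} [NormedAddCommGroup E] [NormedSpace ℝ E]

lemma tendsto_setIntegral_of_aecover_of_dominated {α ι : Type*} [MeasurableSpace α] {μ : Measure α}
    {l : Filter ι} [l.IsCountablyGenerated] {A : ι → Set α} (hA : AECover μ l A)
    {f : ι → α → E} {g : α → E} (bound : α → ℝ)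
    (hmeas : ∀ᶠ i in l, AEStronglyMeasurable (f i) (μ.restrict (A i)))
    (hbound : ∀ᶠ i in l, ∀ᵐ x ∂μ, x ∈ A i → ‖f i x‖ ≤ bound x) (hint : Integrable bound μ)
    (hlim : ∀ᵐ x ∂μ, Tendsto (fun i => f i x) l (𝓝 (g x))) :
    Tendsto (fun i => ∫ x in A i, f i x ∂μ) l (𝓝 (∫ x, g x ∂μ)) := by
  simp_rw [← integral_indicator (hA.measurableSet _)]
  refine tendsto_integral_filter_of_dominated_convergence (fun x => ‖bound x‖) ?_ ?_ hint.norm ?_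
  · filter_upwards [hmeas] with i hi
    exact (aestronglyMeasurable_indicator_iff (hA.measurableSet i)).2 hi
  · filter_upwards [hbound] with i hi
    filter_upwards [hi] with x hbound_x
    by_cases hx : x ∈ A i
    · rw [Set.indicator_of_mem hx]
      exact (hbound_x hx).trans (Real.le_norm_self _)
    · simp only [Set.indicator_of_notMem hx, norm_zero, norm_nonneg]
  · filter_upwards [hlim, hA.ae_eventually_mem] with x hx hmem
    refine hx.congr' ?_
    filter_upwards [hmem] with i hi
    rw [Set.indicator_of_mem hi]

lemma quasiMeasurePreserving_add_mul (d : ℝ) {s : ℝ} (hs : s ≠ 0) :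
    Measure.QuasiMeasurePreserving (fun x : ℝ => d + s * x) := by
  have hmul : Measure.QuasiMeasurePreserving (fun x : ℝ => s * x) := by
    refine ⟨by fun_prop, ?_⟩
    rw [Real.map_volume_mul_left hs]
    exact Measure.smul_absolutelyContinuous
  exact (measurePreserving_add_left volume d).quasiMeasurePreserving.comp hmul

lemma inv_smul_intervalIntegral_window (φ : ℝ → ℝ) (F : ℝ → E) {s : ℝ} (hs : s ≠ 0) (t r : ℝ) :
    s⁻¹ • ∫ k in (-t - r)..(-t + r), φ ((k + t) / s) • F k =
      ∫ x in (-(r / s))..(r / s), φ x • F (-t + s * x) := by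
  have hsubst := intervalIntegral.smul_integral_comp_add_mul (a := -(r / s)) (b := r / s)
    (fun k => φ ((k + t) / s) • F k) s (-t)
  simp only [mul_neg, mul_div_cancel₀ _ hs, ← sub_eq_add_neg, neg_add_cancel_comm,
    mul_div_cancel_left₀ _ hs] at hsubst
  rw [← hsubst, inv_smul_smul₀ hs]

end Integration

section PowerDecay

variable {E : Type*} [NormedAddCommGroup E] [NormedSpace ℝ E] {β : ℝ} {F : ℝ → E}

lemma rpow_smul_eq_div_rpow_neg_smul {t u : ℝ} (ht : 0 < t) (hu : 0 < u) (v : E) :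
    t ^ β • v = (u / t) ^ (-β) • u ^ β • v := by
  have hu' : u ^ β ≠ 0 := (Real.rpow_pos_of_pos hu β).ne'
  rw [smul_smul, Real.rpow_neg (by positivity), Real.div_rpow hu.le ht.le, inv_div,
    div_mul_cancel₀ _ hu']

lemma tendsto_rpow_smul_comp_of_tendsto_div {a : E}
    (hF : Tendsto (fun k => (-k) ^ β • F k) atBot (𝓝 a)) {κ : ℝ → ℝ} {y : ℝ} (hy : 0 < y)
    (hκ : Tendsto (fun t => -κ t / t) atTop (𝓝 y)) :
    Tendsto (fun t => t ^ β • F (κ t)) atTop (𝓝 (y ^ (-β) • a)) := by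
  have hκ_atTop : Tendsto (fun t => -κ t) atTop atTop := by
    refine (tendsto_id.atTop_mul_pos hy hκ).congr' ?_
    filter_upwards [eventually_ne_atTop 0] with t ht
    exact mul_div_cancel₀ _ ht
  have hFκ := hF.comp (tendsto_neg_atTop_iff.1 hκ_atTop)
  refine ((hκ.rpow_const (Or.inl hy.ne')).smul hFκ).congr' ?_
  filter_upwards [eventually_gt_atTop 0, hκ_atTop.eventually_gt_atTop 0] with t ht hκt
  exact (rpow_smul_eq_div_rpow_neg_smul ht hκt _).symm

lemma exists_norm_rpow_smul_le_of_mem_Icc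
    (hF : IsBoundedUnder (· ≤ ·) atBot fun k => ‖(-k) ^ β • F k‖) {b : ℝ} (hb : 0 < b) (B : ℝ) :
    ∃ C, ∀ᶠ t in atTop, ∀ k ∈ Set.Icc (-(B * t)) (-(b * t)), ‖t ^ β • F k‖ ≤ C := by
  obtain ⟨M, hM⟩ := hF
  obtain ⟨K, hK⟩ := eventually_atBot.1 (eventually_map.1 hM)
  obtain ⟨D, hD⟩ := isCompact_Icc.exists_bound_of_continuousOn (s := Set.Icc b B)
    (f := fun u => u ^ (-β)) fun u hu =>
      (Real.continuousAt_rpow_const u (-β) (Or.inl (hb.trans_le hu.1).ne')).continuousWithinAt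
  refine ⟨D * M, ?_⟩
  have hbt : Tendsto (fun t => -(b * t)) atTop atBot :=
    tendsto_neg_atTop_atBot.comp (tendsto_id.const_mul_atTop hb)
  filter_upwards [eventually_gt_atTop 0, hbt.eventually_le_atBot K] with t ht htK k ⟨hBk, hkb⟩
  have hk : 0 < -k := by linarith [mul_pos hb ht]
  have hratio : -k / t ∈ Set.Icc b B :=
    ⟨(le_div_iff₀ ht).2 (by linarith), (div_le_iff₀ ht).2 (by linarith)⟩
  rw [rpow_smul_eq_div_rpow_neg_smul ht hk, norm_smul]
  exact mul_le_mul (hD _ hratio) (hK k (hkb.trans htK)) (norm_nonneg _)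
    ((norm_nonneg _).trans (hD _ hratio))

end PowerDecay

section Window

variable {s r : ℝ → ℝ} {θ : ℝ}

lemma tendsto_scale_div_zero_of_radius_le (hs : ∀ᶠ t in atTop, 0 < s t)
    (hrs : Tendsto (fun t => r t / s t) atTop atTop) (hr : ∀ᶠ t in atTop, r t ≤ θ * t) :
    Tendsto (fun t => s t / t) atTop (𝓝 0) := by
  refine squeeze_zero' ?_ ?_ (tendsto_const_nhds (x := θ) |>.div_atTop hrs)
  · filter_upwards [hs, eventually_gt_atTop 0] with t hst ht
    positivity
  · filter_upwards [hs, hr, hrs.eventually_gt_atTop 0, eventually_gt_atTop 0] with t hst hrt hw ht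
    rw [div_le_div_iff₀ ht hw, mul_div_cancel₀ _ hst.ne']
    exact hrt

variable {E : Type*} [NormedAddCommGroup E] [NormedSpace ℝ E] [CompleteSpace E]
  {β : ℝ} {a : E} {F : ℝ → E}

lemma tendsto_setIntegral_smul_rpow_smul_rescaled {φ : ℝ → ℝ} (hφ : Integrable φ)
    (hs : ∀ᶠ t in atTop, 0 < s t) (hrs : Tendsto (fun t => r t / s t) atTop atTop)
    (hθ : θ < 1) (hr : ∀ᶠ t in atTop, r t ≤ θ * t) (hFmeas : AEStronglyMeasurable F)
    (hF : Tendsto (fun k => (-k) ^ β • F k) atBot (𝓝 a)) :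
    Tendsto (fun t => ∫ x in Set.Ioc (-(r t / s t)) (r t / s t), φ x • t ^ β • F (-t + s t * x))
      atTop (𝓝 ((∫ x, φ x) • a)) := by
  obtain ⟨C, hC⟩ :=
    exists_norm_rpow_smul_le_of_mem_Icc hF.norm.isBoundedUnder_le (sub_pos.2 hθ) (1 + θ)
  rw [← integral_smul_const]
  refine tendsto_setIntegral_of_aecover_of_dominated
    (aecover_Ioc (tendsto_neg_atTop_atBot.comp hrs) hrs) (fun x => ‖φ x‖ * C) ?_ ?_
    (hφ.norm.mul_const C) (ae_of_all _ fun x => ?_)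
  · filter_upwards [hs] with t hst
    have hcomp := hFmeas.comp_quasiMeasurePreserving
      (quasiMeasurePreserving_add_mul (-t) hst.ne')
    exact (hφ.aestronglyMeasurable.smul (hcomp.const_smul _)).restrict
  · filter_upwards [hs, hr, hC] with t hst hrt hCt
    refine ae_of_all _ fun x ⟨hx_lower, hx_upper⟩ => ?_
    have hupper : s t * x ≤ r t := by rwa [mul_comm, ← le_div_iff₀ hst]
    have hlower : -r t < s t * x := by
      rwa [mul_comm, ← div_lt_iff₀ hst, neg_div]
    rw [norm_smul]
    exact mul_le_mul_of_nonneg_left (hCt _ ⟨by linarith, by linarith⟩) (norm_nonneg _)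
  · have hratio : Tendsto (fun t => -(-t + s t * x) / t) atTop (𝓝 1) := by
      have hscale := ((tendsto_scale_div_zero_of_radius_le hs hrs hr).mul_const x).const_sub 1
      rw [zero_mul, sub_zero] at hscale
      refine hscale.congr' ?_
      filter_upwards [eventually_ne_atTop 0] with t ht
      field_simp
      ring
    simpa only [Real.one_rpow, one_smul] using
      (tendsto_rpow_smul_comp_of_tendsto_div hF one_pos hratio).const_smul (φ x)

theorem tendsto_rpow_smul_window_average {φ : ℝ → ℝ} (hφ : Integrable φ)
    (hs : ∀ᶠ t in atTop, 0 < s t) (hrs : Tendsto (fun t => r t / s t) atTop atTop)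
    (hθ : θ < 1) (hr : ∀ᶠ t in atTop, r t ≤ θ * t) (hFmeas : AEStronglyMeasurable F)
    (hF : Tendsto (fun k => (-k) ^ β • F k) atBot (𝓝 a)) :
    Tendsto
      (fun t => t ^ β • (s t)⁻¹ • ∫ k in (-t - r t)..(-t + r t), φ ((k + t) / s t) • F k)
      atTop (𝓝 ((∫ x, φ x) • a)) := by
  refine (tendsto_setIntegral_smul_rpow_smul_rescaled hφ hs hrs hθ hr hFmeas hF).congr' ?_
  filter_upwards [hs, hrs.eventually_ge_atTop 0] with t hst hw
  rw [inv_smul_intervalIntegral_window φ F hst.ne', ← intervalIntegral.integral_smul,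
    intervalIntegral.integral_of_le (by linarith)]
  simp_rw [smul_comm (t ^ β)]

end Window

section Gaussian

lemma tendsto_rpow_div_sqrt_mul_atTop {b q : ℝ} (hb : 0 < b) (hq : 1 / 2 < q) :
    Tendsto (fun t : ℝ => t ^ q / √(b * t)) atTop atTop := by
  have hpow : Tendsto (fun t : ℝ => t ^ (q - 1 / 2) / √b) atTop atTop :=
    (tendsto_rpow_atTop (sub_pos.2 hq)).atTop_div_const (Real.sqrt_pos.2 hb)
  refine hpow.congr' ?_
  filter_upwards [eventually_gt_atTop 0] with t ht
  rw [Real.rpow_sub ht, ← Real.sqrt_eq_rpow, Real.sqrt_mul hb.le, div_div, mul_comm]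

lemma eventually_rpow_le_mul {q θ : ℝ} (hq : q < 1) (hθ : 0 < θ) :
    ∀ᶠ t : ℝ in atTop, t ^ q ≤ θ * t := by
  have hpow : Tendsto (fun t : ℝ => t ^ (1 - q)) atTop atTop :=
    tendsto_rpow_atTop (sub_pos.2 hq)
  filter_upwards [eventually_gt_atTop 0, hpow.eventually_ge_atTop θ⁻¹] with t ht htq
  rw [Real.rpow_sub ht, Real.rpow_one, le_div_iff₀ (by positivity)] at htq
  rwa [← inv_mul_le_iff₀ hθ]

lemma neg_half_mul_div_sqrt_sq {b : ℝ} (hb : 0 ≤ b) (x : ℝ) :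
    -(1 / 2) * (x / √b) ^ 2 = -x ^ 2 / (2 * b) := by
  rw [div_pow, Real.sq_sqrt hb]
  ring

theorem gaussian_window_limit_general {E : Type*} [NormedAddCommGroup E] [NormedSpace ℝ E]
    [CompleteSpace E] {c q : ℝ} (hc : 0 < c) (hq : q ∈ Set.Ioo (1 / 2 : ℝ) 1) (β : ℝ) {a : E}
    {F : ℝ → E} (hFmeas : AEStronglyMeasurable F)
    (hF : Tendsto (fun k => (-k) ^ β • F k) atBot (𝓝 a)) :
    Tendsto (fun t : ℝ => t ^ β • (√(2 * c * t))⁻¹ •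
        ∫ k in (-t - t ^ q)..(-t + t ^ q), Real.exp (-(k + t) ^ 2 / (4 * c * t)) • F k)
      atTop (𝓝 (√(2 * Real.pi) • a)) := by
  have hs : ∀ᶠ t : ℝ in atTop, 0 < √(2 * c * t) := by
    filter_upwards [eventually_gt_atTop 0] with t ht
    positivity
  have hwindow := tendsto_rpow_smul_window_average
    (integrable_exp_neg_mul_sq one_half_pos) hs
    (tendsto_rpow_div_sqrt_mul_atTop (by positivity) hq.1) one_half_lt_one
    (eventually_rpow_le_mul hq.2 one_half_pos) hFmeas hF
  rw [integral_gaussian, div_div_eq_mul_div, div_one, mul_comm Real.pi] at hwindow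
  refine hwindow.congr' ?_
  filter_upwards [eventually_ge_atTop 0] with t ht
  have hvariance : 2 * (2 * c * t) = 4 * c * t := by ring
  simp_rw [neg_half_mul_div_sqrt_sq (by positivity : 0 ≤ 2 * c * t), hvariance]

end Gaussian

/-- if `F` is bounded measurable with `(−k)^β F(k) → a` as `k → −∞`, then
`n^β (2cn)^{−1/2} ∫_{−n−n^q}^{−n+n^q} F(k) e^{−(k+n)²/(4cn)} dk → √(2π) a`. -/
theorem gaussian_window_limit
    (c q β : ℝ) (hc : 0 < c) (hq : q ∈ Set.Ioo (1/2 : ℝ) 1) (hβ : 0 < β)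
    (a : ℂ) (F : ℝ → ℂ) (hFmeas : Measurable F)
    (M : ℝ) (hFbdd : ∀ k : ℝ, ‖F k‖ ≤ M)
    (hlim : Tendsto (fun k : ℝ => (((-k) ^ β : ℝ) : ℂ) * F k) atBot (𝓝 a)) :
    Tendsto (fun n : ℕ => (((n:ℝ) ^ β : ℝ) : ℂ) *
        ((Real.sqrt (2*c*(n:ℝ)) : ℂ)⁻¹ *
          ∫ k in (-(n:ℝ) - (n:ℝ)^q)..(-(n:ℝ) + (n:ℝ)^q),
            F k * Complex.exp (-((k:ℂ) + (n:ℂ))^2 / (4*c*(n:ℝ)))))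
      atTop (𝓝 ((Real.sqrt (2*Real.pi) : ℂ) * a)) := by
  refine ((gaussian_window_limit_general hc hq β hFmeas.aestronglyMeasurable hlim).comp
    tendsto_natCast_atTop_atTop).congr fun n => ?_
  simp [mul_comm (F _)]
end

section
/- Let f be analytic on the open unit disc 𝔻 ⊂ ℂ with Maclaurin series f(p) = ∑_{k≥0} c_k p^k. Then Af is analytic on 𝔻 and (Af)(p) = √π ∑_{k≥0} (Γ(k+1)/Γ(k+1/2)) c_k p^k for all p ∈ 𝔻, the series on the right converging for all p ∈ 𝔻. -/
open MeasureTheory Filter Topology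

/-- `G_f(p) = ∫_0^1 f(pt)(1−t)^{−1/2} dt`. -/
noncomputable def Gop (f : ℂ → ℂ) (p : ℂ) : ℂ :=
  ∫ t in (0:ℝ)..1, f (p * (t:ℂ)) * (((1 - t) ^ (-(1/2) : ℝ) : ℝ) : ℂ)

/-- `(Af)(p) = G_f(p)/2 + p·G_f'(p)`, realizing `√p (d/dp)[p^{−1/2} * f](p)`. -/
noncomputable def Aop (f : ℂ → ℂ) (p : ℂ) : ℂ :=
  Gop f p / 2 + p * deriv (Gop f) p

/-!
Multiplying the coefficients of a power series by the moments `∫₀¹ tᵏ w(t) dt` of an integrable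
weight averages its sum over the dilations `z ↦ tz`. For `w(t) = (1 - t)^(-1/2)` the moments are
the Beta values `B(k + 1, 1/2)`, so `G_f(p) = ∑ B(k + 1, 1/2) c_k p^k`. The operator `1/2 + p d/dp`
multiplies the `k`-th coefficient by `k + 1/2`, and this factor lowers the argument of the Gamma
function in the denominator: `(k + 1/2) B(k + 1, 1/2) = Γ(k + 1) Γ(1/2) / Γ(k + 1/2)`.
-/

open FormalMultilinearSeries (ofScalars)
open scoped ENNReal

section PowerSeries

theorem le_radius_ofScalars_of_summable {𝕜 : Type*} [DenselyNormedField 𝕜] {c : ℕ → 𝕜} {r : ℝ≥0∞}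
    (h : ∀ z ∈ Metric.eball 0 r, Summable fun k => c k * z ^ k) : r ≤ (ofScalars 𝕜 c).radius := by
  refine ENNReal.le_of_forall_nnreal_lt fun s hsr => ?_
  obtain ⟨s', hss', hs'r⟩ := ENNReal.lt_iff_exists_nnreal_btwn.1 hsr
  obtain ⟨z, hsz, hzs'⟩ := NormedField.exists_lt_nnnorm_lt 𝕜 (ENNReal.coe_lt_coe.1 hss')
  have hz : z ∈ Metric.eball 0 r :=
    mem_eball_zero_iff.2 ((ENNReal.coe_lt_coe.2 hzs').trans hs'r)
  have hterms : Tendsto (fun k => ‖ofScalars 𝕜 c k‖ * (‖z‖₊ : ℝ) ^ k) atTop (𝓝 0) := by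
    simpa using (h z hz).tendsto_atTop_zero.norm
  exact (ENNReal.coe_le_coe.2 hsz.le).trans ((ofScalars 𝕜 c).le_radius_of_tendsto hterms)

theorem hasFPowerSeriesOnBall_ofScalars_zero_iff {𝕜 : Type*} [DenselyNormedField 𝕜] {f : 𝕜 → 𝕜}
    {c : ℕ → 𝕜} {r : ℝ≥0∞} :
    HasFPowerSeriesOnBall f (ofScalars 𝕜 c) 0 r ↔
      0 < r ∧ ∀ z ∈ Metric.eball 0 r, HasSum (fun k => c k * z ^ k) (f z) := by
  refine ⟨fun h => ⟨h.r_pos, fun z hz => ?_⟩, fun ⟨hr, h⟩ => ⟨?_, hr, fun {z} hz => ?_⟩⟩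
  · simpa [FormalMultilinearSeries.ofScalars_apply_eq, mul_comm] using h.hasSum hz
  · exact le_radius_ofScalars_of_summable fun z hz => (h z hz).summable
  · simpa [FormalMultilinearSeries.ofScalars_apply_eq, mul_comm] using h z hz

variable {𝕜 E F : Type*} [NormedAddCommGroup E] [NormedAddCommGroup F]

theorem hasSum_nsmul_fderiv_apply [NontriviallyNormedField 𝕜] [NormedSpace 𝕜 E]
    [NormedSpace 𝕜 F] [CompleteSpace F] {f : E → F} {p : FormalMultilinearSeries 𝕜 E F} {x y : E}
    {r : ℝ≥0∞} (hf : HasFPowerSeriesOnBall f p x r) (hy : y ∈ Metric.eball 0 r) :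
    HasSum (fun k => k • p k fun _ => y) (fderiv 𝕜 f (x + y) y) := by
  have h := (hf.fderiv.hasSum hy).mapL (ContinuousLinearMap.apply 𝕜 F y)
  rw [← hasSum_nat_add_iff' 1]
  simpa [FormalMultilinearSeries.derivSeries_apply_diag] using h

theorem hasSum_integral_smul_dilation [RCLike 𝕜] [NormedSpace 𝕜 E] [NormedSpace 𝕜 F]
    [NormedSpace ℝ F] [CompleteSpace F] {f : E → F} {p : FormalMultilinearSeries 𝕜 E F} {x y : E}
    {r : ℝ≥0∞} {w : ℝ → 𝕜} (hw : IntervalIntegrable w volume 0 1)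
    (hf : HasFPowerSeriesOnBall f p x r) (hy : y ∈ Metric.eball 0 r) :
    HasSum (fun k => (∫ t in (0 : ℝ)..1, (t : 𝕜) ^ k * w t) • p k fun _ => y)
      (∫ t in (0 : ℝ)..1, w t • f (x + (t : 𝕜) • y)) := by
  have hunit : Set.uIoc (0 : ℝ) 1 = Set.Ioc 0 1 := Set.uIoc_of_le zero_le_one
  have hsummable : Summable fun k => ‖p k fun _ => y‖ :=
    p.summable_norm_apply (Metric.eball_subset_eball hf.r_le hy)
  simp_rw [← intervalIntegral.integral_smul_const]
  refine intervalIntegral.hasSum_integral_of_dominated_convergence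
    (fun k t => ‖p k fun _ => y‖ * ‖w t‖) (fun k => ?_) (fun k => ?_) ?_ ?_ ?_
  · have hmeas : AEStronglyMeasurable w (volume.restrict (Set.uIoc 0 1)) :=
      hw.def'.aestronglyMeasurable
    have hpow : Continuous fun t : ℝ => (t : 𝕜) ^ k := by fun_prop
    exact (hpow.aestronglyMeasurable.mul hmeas).smul_const _
  · refine Eventually.of_forall fun t ht => ?_
    rw [hunit] at ht
    have htk : ‖(t : 𝕜) ^ k‖ ≤ 1 := by
      rw [norm_pow, RCLike.norm_of_nonneg ht.1.le]
      exact pow_le_one₀ ht.1.le ht.2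
    rw [norm_smul, norm_mul, mul_comm]
    gcongr
    exact mul_le_of_le_one_left (norm_nonneg _) htk
  · exact Eventually.of_forall fun t _ => hsummable.mul_right _
  · simp_rw [tsum_mul_right]
    exact hw.norm.const_mul _
  · refine Eventually.of_forall fun t ht => ?_
    rw [hunit] at ht
    have hty : (t : 𝕜) • y ∈ Metric.eball 0 r := by
      rw [mem_eball_zero_iff] at hy ⊢
      refine lt_of_le_of_lt (enorm_le_iff_norm_le.2 ?_) hy
      rw [norm_smul, RCLike.norm_of_nonneg ht.1.le]
      exact mul_le_of_le_one_left (norm_nonneg _) ht.2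
    simpa [(p _).map_smul_univ, smul_smul, mul_comm] using (hf.hasSum hty).const_smul (w t)

end PowerSeries

theorem intervalIntegrable_one_sub_rpow {s : ℝ} (hs : -1 < s) (a b : ℝ) :
    IntervalIntegrable (fun t : ℝ => (1 - t) ^ s) volume a b := by
  simpa using (intervalIntegral.intervalIntegrable_rpow' (a := 1 - a) (b := 1 - b)
    hs).comp_sub_left 1

theorem integral_pow_mul_one_sub_rpow (k : ℕ) (a : ℝ) :
    ∫ t in (0 : ℝ)..1, (t : ℂ) ^ k * (((1 - t) ^ a : ℝ) : ℂ) =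
      Complex.betaIntegral (k + 1) (a + 1) := by
  refine intervalIntegral.integral_congr fun t ht => ?_
  rw [Set.uIcc_of_le zero_le_one] at ht
  simp [Complex.ofReal_cpow (sub_nonneg.2 ht.2)]

theorem add_mul_betaIntegral_add_one {u v : ℂ} (hu : 0 < (u + 1).re) (hv : 0 < v.re)
    (huv : u + v ≠ 0) :
    (u + v) * Complex.betaIntegral (u + 1) v =
      Complex.Gamma (u + 1) * Complex.Gamma v / Complex.Gamma (u + v) := by
  rw [Complex.betaIntegral_eq_Gamma_mul_div _ _ hu hv, add_right_comm,
    Complex.Gamma_add_one _ huv, ← mul_div_assoc, mul_div_mul_left _ _ huv]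

theorem add_half_mul_betaIntegral_add_one_half {x : ℝ} (hx : -(1 / 2) < x) :
    (x + 1 / 2) * Complex.betaIntegral (x + 1) (1 / 2) =
      (Real.sqrt Real.pi : ℂ) * ((Real.Gamma (x + 1) / Real.Gamma (x + 1 / 2) : ℝ) : ℂ) := by
  have hre : 0 < ((x : ℂ) + 1).re := show 0 < x + 1 by linarith
  have hne : (x : ℂ) + 1 / 2 ≠ 0 := by
    simpa using Complex.ofReal_ne_zero.2 (show x + 1 / 2 ≠ 0 by linarith)
  rw [add_mul_betaIntegral_add_one hre (by simp) hne, ← Real.Gamma_one_half_eq]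
  push_cast [← Complex.Gamma_ofReal]
  ring

theorem hasFPowerSeriesOnBall_Gop {f : ℂ → ℂ} {c : ℕ → ℂ} {r : ℝ≥0∞}
    (hf : HasFPowerSeriesOnBall f (ofScalars ℂ c) 0 r) :
    HasFPowerSeriesOnBall (Gop f)
      (ofScalars ℂ fun k => Complex.betaIntegral (k + 1) (1 / 2) * c k) 0 r := by
  refine hasFPowerSeriesOnBall_ofScalars_zero_iff.2 ⟨hf.r_pos, fun p hp => ?_⟩
  have hint := intervalIntegrable_one_sub_rpow (s := -(1 / 2)) (by norm_num) 0 1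
  have hw : IntervalIntegrable (fun t : ℝ => (((1 - t) ^ (-(1 / 2) : ℝ) : ℝ) : ℂ)) volume 0 1 :=
    ⟨hint.1.ofReal, hint.2.ofReal⟩
  have hmoment (k : ℕ) : ∫ t in (0 : ℝ)..1, (t : ℂ) ^ k * (((1 - t) ^ (-(1 / 2) : ℝ) : ℝ) : ℂ) =
      Complex.betaIntegral (k + 1) (1 / 2) := by
    rw [integral_pow_mul_one_sub_rpow]
    norm_num
  have hsum := hasSum_integral_smul_dilation hw hf hp
  simp only [Complex.coe_algebraMap, hmoment, FormalMultilinearSeries.ofScalars_apply_eq,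
    smul_eq_mul, zero_add, ← mul_assoc] at hsum
  simpa only [Gop, mul_comm] using hsum

theorem Aop_of_power_series_general {f : ℂ → ℂ} {c : ℕ → ℂ} {r : ℝ≥0∞}
    (hf : HasFPowerSeriesOnBall f (ofScalars ℂ c) 0 r) :
    HasFPowerSeriesOnBall (Aop f)
      (ofScalars ℂ fun k => (Real.sqrt Real.pi : ℂ) *
        ((Real.Gamma ((k : ℝ) + 1) / Real.Gamma ((k : ℝ) + 1 / 2) : ℝ) : ℂ) * c k) 0 r := by
  have hG := hasFPowerSeriesOnBall_Gop hf
  refine hasFPowerSeriesOnBall_ofScalars_zero_iff.2 ⟨hf.r_pos, fun p hp => ?_⟩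
  have hsum := (hasFPowerSeriesOnBall_ofScalars_zero_iff.1 hG).2 p hp
  have heuler := hasSum_nsmul_fderiv_apply hG hp
  convert (hsum.div_const 2).add heuler using 2 with k
  · have hcoeff := add_half_mul_betaIntegral_add_one_half (x := k)
      (by linarith [Nat.cast_nonneg (α := ℝ) k])
    rw [← hcoeff]
    simp only [FormalMultilinearSeries.ofScalars_apply_eq, nsmul_eq_mul, smul_eq_mul,
      Complex.ofReal_natCast]
    ring
  · simp [Aop]

/-- if `f(p) = ∑ c_k p^k` on the unit disc, then `Af` is analytic on the disc
and `(Af)(p) = √π ∑ (Γ(k+1)/Γ(k+1/2)) c_k p^k` there, the series converging on the disc. -/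
theorem Aop_of_power_series
    (f : ℂ → ℂ) (c : ℕ → ℂ)
    (hfan : AnalyticOnNhd ℂ f (Metric.ball (0:ℂ) 1))
    (hf : ∀ p ∈ Metric.ball (0:ℂ) 1, HasSum (fun k : ℕ => c k * p ^ k) (f p)) :
    AnalyticOnNhd ℂ (Aop f) (Metric.ball (0:ℂ) 1) ∧
    ∀ p ∈ Metric.ball (0:ℂ) 1,
      HasSum (fun k : ℕ => (Real.sqrt Real.pi : ℂ) *
        ((Real.Gamma ((k:ℝ)+1) / Real.Gamma ((k:ℝ)+1/2) : ℝ) : ℂ) * c k * p ^ k)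
        (Aop f p) := by
  have hball : Metric.eball (0 : ℂ) 1 = Metric.ball 0 1 := by
    simpa using Metric.eball_coe (x := (0 : ℂ)) (ε := 1)
  rw [← hball] at hf ⊢
  have hA := Aop_of_power_series_general (hasFPowerSeriesOnBall_ofScalars_zero_iff.2 ⟨one_pos, hf⟩)
  exact ⟨hA.analyticOnNhd, (hasFPowerSeriesOnBall_ofScalars_zero_iff.1 hA).2⟩
end

section
/- Let D ⊂ ℂ be an open set that is star-shaped with respect to 0 (i.e. 0 ∈ D and for every p ∈ D the segment {pt : t ∈ [0,1]} is contained in D) and contains the open unit disc 𝔻. If f is analytic on D, then Af is analytic on D. -/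
open MeasureTheory Filter Topology

/-!
The weight `(1 - t) ^ (-1/2)` is integrable on `[0, 1]`, and `(p, t) ↦ f (p t)` is continuous in
`(p, t)` and holomorphic in `p`. It is therefore bounded locally uniformly in `p`; Cauchy's estimate
turns this into a bound on its `p`-derivative, so the integral `G_f` may be differentiated under the
integral sign and is holomorphic. `Af` is a polynomial expression in `p`, `G_f` and `G_f'`.
-/

theorem aestronglyMeasurable_of_ae_hasDerivAt {𝕜 α E : Type*} [NontriviallyNormedField 𝕜]
    [NormedAddCommGroup E] [NormedSpace 𝕜 E] [MeasurableSpace α] {μ : Measure α}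
    {F : 𝕜 → α → E} {F' : α → E} {x : 𝕜}
    (hmeas : ∀ᶠ y in 𝓝 x, AEStronglyMeasurable (F y) μ)
    (hderiv : ∀ᵐ a ∂μ, HasDerivAt (F · a) (F' a) x) :
    AEStronglyMeasurable F' μ := by
  obtain ⟨y, hy_lim⟩ := exists_seq_tendsto (𝓝[≠] x)
  have hy_meas : ∀ᶠ n in atTop, AEStronglyMeasurable (F (y n)) μ :=
    (tendsto_nhds_of_tendsto_nhdsWithin hy_lim).eventually hmeas
  obtain ⟨N, hN⟩ := eventually_atTop.1 hy_meas
  refine aestronglyMeasurable_of_tendsto_ae atTop (f := fun n a ↦ slope (F · a) x (y (n + N)))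
    (fun n ↦ ((hN _ (Nat.le_add_left N n)).sub hmeas.self_of_nhds).const_smul _) ?_
  filter_upwards [hderiv] with a ha
  exact ha.tendsto_slope.comp (hy_lim.comp (tendsto_add_atTop_nat N))

theorem intervalIntegrable_const_sub_rpow {r : ℝ} (hr : -1 < r) (a b c : ℝ) :
    IntervalIntegrable (fun t ↦ (c - t) ^ r) volume a b := by
  simpa only [sub_sub_cancel] using
    (intervalIntegral.intervalIntegrable_rpow' (a := c - a) (b := c - b) hr).comp_sub_left c

section ParametricIntegral

variable {α E : Type*} [MeasurableSpace α] {μ : Measure α}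
  [NormedAddCommGroup E] [NormedSpace ℂ E] {U : Set ℂ} {F : ℂ → α → E}

theorem differentiableAt_integral_of_dominated {z : ℂ} {bound : α → ℝ} (hU : U ∈ 𝓝 z)
    (hmeas : ∀ᶠ x in 𝓝 z, AEStronglyMeasurable (F x) μ)
    (hdiff : ∀ᵐ a ∂μ, DifferentiableOn ℂ (F · a) U)
    (hbound : ∀ᵐ a ∂μ, ∀ x ∈ U, ‖F x a‖ ≤ bound a) (hbound_int : Integrable bound μ) :
    DifferentiableAt ℂ (fun x ↦ ∫ a, F x a ∂μ) z := by
  obtain ⟨r, hr, hrU⟩ := Metric.nhds_basis_closedBall.mem_iff.1 hU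
  have hclosedBall {x : ℂ} (hx : x ∈ Metric.ball z (r / 2)) : Metric.closedBall x (r / 2) ⊆ U :=
    (Metric.closedBall_subset_closedBall' (by linarith [Metric.mem_ball.1 hx])).trans hrU
  have hderiv : ∀ᵐ a ∂μ, ∀ x ∈ Metric.ball z (r / 2),
      HasDerivAt (F · a) (deriv (F · a) x) x := by
    filter_upwards [hdiff] with a ha x hx
    exact (ha.differentiableAt (mem_of_superset
      (Metric.closedBall_mem_nhds x (half_pos hr)) (hclosedBall hx))).hasDerivAt
  have hcauchy : ∀ᵐ a ∂μ, ∀ x ∈ Metric.ball z (r / 2),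
      ‖deriv (F · a) x‖ ≤ bound a / (r / 2) := by
    filter_upwards [hdiff, hbound] with a ha hb x hx
    exact Complex.norm_deriv_le_of_forall_mem_sphere_norm_le (half_pos hr)
      (ha.mono (Metric.closure_ball_subset_closedBall.trans (hclosedBall hx))).diffContOnCl
      fun y hy ↦ hb y (hclosedBall hx (Metric.sphere_subset_closedBall hy))
  have hz : z ∈ Metric.ball z (r / 2) := Metric.mem_ball_self (half_pos hr)
  have hFz : Integrable (F z) μ :=
    hbound_int.mono' hmeas.self_of_nhds (hbound.mono fun a ha ↦ ha z (mem_of_mem_nhds hU))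
  have hF'z : AEStronglyMeasurable (fun a ↦ deriv (F · a) z) μ :=
    aestronglyMeasurable_of_ae_hasDerivAt hmeas (hderiv.mono fun a ha ↦ ha z hz)
  exact (hasDerivAt_integral_of_dominated_loc_of_deriv_le
    (Metric.ball_mem_nhds z (half_pos hr)) hmeas hFz hF'z hcauchy
    (hbound_int.div_const _) hderiv).2.differentiableAt

theorem differentiableOn_setIntegral_smul [TopologicalSpace α] [T2Space α]
    [OpensMeasurableSpace α] {K : Set α} {w : α → ℂ} (hU : IsOpen U) (hK : IsCompact K)
    (hw : IntegrableOn w K μ) (hcont : ContinuousOn (Function.uncurry F) (U ×ˢ K))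
    (hdiff : ∀ a ∈ K, DifferentiableOn ℂ (F · a) U) :
    DifferentiableOn ℂ (fun z ↦ ∫ a in K, w a • F z a ∂μ) U := by
  intro z hz
  obtain ⟨r, hr, hrU⟩ := Metric.nhds_basis_closedBall.mem_iff.1 (hU.mem_nhds hz)
  obtain ⟨M, hM⟩ := ((isCompact_closedBall z r).prod hK).exists_bound_of_continuousOn
    (hcont.mono (Set.prod_mono_left hrU))
  have hmeas : ∀ x ∈ U, AEStronglyMeasurable (fun a ↦ w a • F x a) (μ.restrict K) :=
    fun x hx ↦ hw.aestronglyMeasurable.smul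
      ((hcont.uncurry_left x hx).aestronglyMeasurable_of_isCompact hK hK.measurableSet)
  refine (differentiableAt_integral_of_dominated (bound := fun a ↦ ‖w a‖ * M)
    (Metric.closedBall_mem_nhds z hr) (eventually_of_mem (hU.mem_nhds hz) hmeas)
    (ae_restrict_of_forall_mem hK.measurableSet fun a ha ↦
      ((hdiff a ha).mono hrU).const_smul (w a))
    (ae_restrict_of_forall_mem hK.measurableSet fun a ha x hx ↦ ?_)
    (hw.norm.mul_const M)).differentiableWithinAt
  rw [norm_smul]
  exact mul_le_mul_of_nonneg_left (hM (x, a) ⟨hx, ha⟩) (norm_nonneg _)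

end ParametricIntegral

theorem differentiableOn_intervalIntegral_smul_comp_smul {E : Type*} [NormedAddCommGroup E]
    [NormedSpace ℂ E] {D : Set ℂ} {f : ℂ → E} {w : ℝ → ℂ} (hD : IsOpen D)
    (hstar : StarConvex ℝ 0 D) (hf : DifferentiableOn ℂ f D)
    (hw : IntervalIntegrable w volume 0 1) :
    DifferentiableOn ℂ (fun p ↦ ∫ t in (0 : ℝ)..1, w t • f (t • p)) D := by
  have hmaps : ∀ t ∈ Set.Icc (0 : ℝ) 1, Set.MapsTo (fun p : ℂ ↦ t • p) D D :=
    fun t ht p hp ↦ hstar.smul_mem hp ht.1 ht.2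
  have hcont : ContinuousOn (fun q : ℂ × ℝ ↦ f (q.2 • q.1)) (D ×ˢ Set.Icc 0 1) :=
    hf.continuousOn.comp (by fun_prop) fun q hq ↦ hmaps q.2 hq.2 hq.1
  simp only [intervalIntegral.integral_of_le zero_le_one, ← integral_Icc_eq_integral_Ioc]
  exact differentiableOn_setIntegral_smul hD isCompact_Icc
    ((intervalIntegrable_iff_integrableOn_Icc_of_le zero_le_one).1 hw) hcont
    fun t ht ↦ hf.comp (by fun_prop) (hmaps t ht)

theorem differentiableOn_Gop {D : Set ℂ} {f : ℂ → ℂ} (hD : IsOpen D)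
    (hstar : StarConvex ℝ 0 D) (hf : DifferentiableOn ℂ f D) :
    DifferentiableOn ℂ (Gop f) D := by
  have hw : IntervalIntegrable (fun t : ℝ ↦ (1 - t) ^ (-(1 / 2) : ℝ)) volume 0 1 :=
    intervalIntegrable_const_sub_rpow (by norm_num) 0 1 1
  refine (differentiableOn_intervalIntegral_smul_comp_smul hD hstar hf
    (w := fun t ↦ ((1 - t) ^ (-(1 / 2) : ℝ) : ℝ)) ⟨hw.1.ofReal, hw.2.ofReal⟩).congr fun p _ ↦ ?_
  simp only [Gop, smul_eq_mul, Complex.real_smul, mul_comm]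

theorem Aop_analytic_on_starshaped_general {D : Set ℂ} (hD : IsOpen D)
    (hstar : StarConvex ℝ 0 D) {f : ℂ → ℂ} (hf : AnalyticOnNhd ℂ f D) :
    AnalyticOnNhd ℂ (Aop f) D := by
  have hG : AnalyticOnNhd ℂ (Gop f) D :=
    (differentiableOn_Gop hD hstar hf.differentiableOn).analyticOnNhd hD
  exact hG.div_const.add (analyticOnNhd_id.mul hG.deriv)

/-- if `D` is open, star-shaped with respect to `0`, contains the unit disc,
and `f` is analytic on `D`, then `Af` is analytic on `D`. -/
theorem Aop_analytic_on_starshaped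
    (D : Set ℂ) (hD : IsOpen D) (h0 : (0:ℂ) ∈ D)
    (hstar : ∀ p ∈ D, ∀ t ∈ Set.Icc (0:ℝ) 1, (t:ℂ) * p ∈ D)
    (hball : Metric.ball (0:ℂ) 1 ⊆ D)
    (f : ℂ → ℂ) (hf : AnalyticOnNhd ℂ f D) :
    AnalyticOnNhd ℂ (Aop f) D :=
  Aop_analytic_on_starshaped_general hD
    (starConvex_zero_iff.2 fun p hp t ht₀ ht₁ ↦ by simpa using hstar p hp t ⟨ht₀, ht₁⟩) hf
end

section
/- Let Ω := ℂ ∖ ((−∞,−1] ∪ [1,∞)). For x ∈ [−1,1] let f_x(p) := (1 − px)^{−1/2}, using the principal branch of the square root (note 1 − px ∉ (−∞,0] for p ∈ Ω). Then f_x is analytic on Ω and (A f_x)(p) = (1 − px)^{−1} for every p ∈ Ω. -/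
open MeasureTheory Filter Topology

/-- `Ω = ℂ ∖ ((−∞,−1] ∪ [1,∞))`. -/
def Omega : Set ℂ :=
  (Complex.ofReal '' (Set.Iic (-1) ∪ Set.Ici 1))ᶜ

/-!
Scaling reduces the formula to `x = 1`: with `f z = (1 - z)^(-1/2)`, the function `q ↦ f (q * x)`
satisfies `A (f (· * x)) p = (A f) (p * x)`. Differentiating under the integral,
`(A f) u = ∫₀¹ (f (u t) / 2 + u t f' (u t)) (1 - t)^(-1/2) dt`, and for this `f` the bracket
collapses to `(1 - u t)^(-3/2) / 2`. The resulting integral is elementary, because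
`(1 - u t)^(-a) (1 - t)^a` has derivative `-a (1 - u) (1 - u t)^(-a-1) (1 - t)^(a-1)`.
-/

section SlitPlane

theorem one_sub_mul_ofReal_mem_slitPlane {u : ℂ} (hu : 1 - u ∈ Complex.slitPlane) {t : ℝ}
    (ht : t ∈ Set.Icc (0 : ℝ) 1) : 1 - u * t ∈ Complex.slitPlane := by
  have hmem := Complex.starConvex_one_slitPlane hu (sub_nonneg.2 ht.2) ht.1 (sub_add_cancel 1 t)
  convert hmem using 1
  simp only [Complex.real_smul, Complex.ofReal_sub, Complex.ofReal_one]
  ring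

theorem one_sub_mem_slitPlane_of_mem_Omega {p : ℂ} (hp : p ∈ Omega) :
    1 - p ∈ Complex.slitPlane := by
  by_contra h
  obtain ⟨hre, him⟩ := not_or.1 (mt Complex.mem_slitPlane_iff.2 h)
  simp only [Complex.sub_re, Complex.one_re, Complex.sub_im, Complex.one_im] at hre him
  exact hp ⟨p.re, .inr (by simp only [Set.mem_Ici]; linarith), Complex.ext rfl
    (by simp only [Complex.ofReal_im]; linarith [not_not.1 him])⟩

theorem neg_mem_Omega {p : ℂ} (hp : p ∈ Omega) : -p ∈ Omega := by
  rintro ⟨s, hs, hsp⟩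
  refine hp ⟨-s, ?_, by rw [Complex.ofReal_neg, hsp, neg_neg]⟩
  exact hs.symm.imp (fun h : 1 ≤ s ↦ neg_le_neg h) (fun h : s ≤ -1 ↦ le_neg.1 h)

theorem one_sub_mul_mem_slitPlane_of_mem_Omega {x : ℝ} (hx : x ∈ Set.Icc (-1 : ℝ) 1) {p : ℂ}
    (hp : p ∈ Omega) : 1 - p * x ∈ Complex.slitPlane := by
  rcases le_total 0 x with hx₀ | hx₀
  · exact one_sub_mul_ofReal_mem_slitPlane (one_sub_mem_slitPlane_of_mem_Omega hp) ⟨hx₀, hx.2⟩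
  · simpa only [Complex.ofReal_neg, neg_mul_neg] using one_sub_mul_ofReal_mem_slitPlane
      (one_sub_mem_slitPlane_of_mem_Omega (neg_mem_Omega hp))
      (t := -x) ⟨neg_nonneg.2 hx₀, neg_le.1 hx.1⟩

end SlitPlane

section EulerIntegral

theorem cpow_sub_one_mul {z : ℂ} (hz : z ≠ 0) (c : ℂ) : z ^ (c - 1) * z = z ^ c := by
  rw [Complex.cpow_sub _ _ hz, Complex.cpow_one, div_mul_cancel₀ _ hz]

theorem hasDerivAt_one_sub_mul_ofReal_cpow {u : ℂ} {t : ℝ}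
    (h : 1 - u * t ∈ Complex.slitPlane) (c : ℂ) :
    HasDerivAt (fun s : ℝ ↦ (1 - u * s) ^ c) (-(c * u) * (1 - u * t) ^ (c - 1)) t := by
  have hlin : HasDerivAt (fun z : ℂ ↦ 1 - u * z) (-u) (t : ℂ) := by
    simpa using ((hasDerivAt_id (t : ℂ)).const_mul u).const_sub 1
  exact (hlin.cpow_const h).comp_ofReal.congr_deriv (by ring)

theorem continuousOn_one_sub_mul_ofReal_cpow {u : ℂ} (hu : 1 - u ∈ Complex.slitPlane) (c : ℂ) :
    ContinuousOn (fun t : ℝ ↦ (1 - u * t) ^ c) (Set.Icc 0 1) := fun _ ht ↦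
  (hasDerivAt_one_sub_mul_ofReal_cpow
    (one_sub_mul_ofReal_mem_slitPlane hu ht) c).continuousAt.continuousWithinAt

theorem hasDerivAt_one_sub_mul_cpow_neg_mul_one_sub_cpow {u : ℂ} {t : ℝ}
    (h : 1 - u * t ∈ Complex.slitPlane) (ht : t < 1) (a : ℂ) :
    HasDerivAt (fun s : ℝ ↦ (1 - u * s) ^ (-a) * (1 - (s : ℂ)) ^ a)
      (-(a * (1 - u)) * ((1 - u * t) ^ (-a - 1) * (1 - (t : ℂ)) ^ (a - 1))) t := by
  have h₁ : 1 - (t : ℂ) ∈ Complex.slitPlane := by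
    simpa [Complex.mem_slitPlane_iff] using ht
  have hweight : HasDerivAt (fun s : ℝ ↦ (1 - (s : ℂ)) ^ a) (-a * (1 - (t : ℂ)) ^ (a - 1)) t := by
    simpa using hasDerivAt_one_sub_mul_ofReal_cpow (u := 1) (by simpa using h₁) a
  refine ((hasDerivAt_one_sub_mul_ofReal_cpow h (-a)).mul hweight).congr_deriv ?_
  rw [← cpow_sub_one_mul (Complex.slitPlane_ne_zero h) (-a),
    ← cpow_sub_one_mul (Complex.slitPlane_ne_zero h₁) a]
  ring

theorem intervalIntegrable_one_sub_cpow {a : ℂ} (ha : 0 < a.re) :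
    IntervalIntegrable (fun t : ℝ ↦ (1 - (t : ℂ)) ^ (a - 1)) volume 0 1 := by
  have hpow : IntervalIntegrable (fun t : ℝ ↦ (t : ℂ) ^ (a - 1)) volume 0 1 :=
    intervalIntegral.intervalIntegrable_cpow' (by simpa using ha)
  simpa using (hpow.comp_sub_left 1).symm

theorem integral_one_sub_mul_cpow_mul_one_sub_cpow {a u : ℂ} (ha : 0 < a.re)
    (hu : 1 - u ∈ Complex.slitPlane) :
    ∫ t in (0 : ℝ)..1, (1 - u * t) ^ (-a - 1) * (1 - (t : ℂ)) ^ (a - 1) = (a * (1 - u))⁻¹ := by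
  have ha₀ : a ≠ 0 := by rintro rfl; simp at ha
  have hweight : Continuous fun t : ℝ ↦ (1 - (t : ℂ)) ^ a := by
    simpa only [Function.comp_def, Complex.ofReal_sub, Complex.ofReal_one] using
      (Complex.continuous_ofReal_cpow_const ha).comp (continuous_sub_left 1)
  have hint : IntervalIntegrable
      (fun t : ℝ ↦ (1 - u * t) ^ (-a - 1) * (1 - (t : ℂ)) ^ (a - 1)) volume 0 1 :=
    (intervalIntegrable_one_sub_cpow ha).continuousOn_mul
      (by simpa using continuousOn_one_sub_mul_ofReal_cpow hu (-a - 1))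
  have hftc : ∫ t in (0 : ℝ)..1,
      -(a * (1 - u)) * ((1 - u * t) ^ (-a - 1) * (1 - (t : ℂ)) ^ (a - 1)) = -1 := by
    rw [intervalIntegral.integral_eq_sub_of_hasDerivAt_of_le zero_le_one
      ((continuousOn_one_sub_mul_ofReal_cpow hu (-a)).mul hweight.continuousOn)
      (fun t ht ↦ hasDerivAt_one_sub_mul_cpow_neg_mul_one_sub_cpow
        (one_sub_mul_ofReal_mem_slitPlane hu (Set.Ioo_subset_Icc_self ht)) ht.2 a)
      (hint.const_mul _)]
    simp [ha₀]
  rw [intervalIntegral.integral_const_mul, neg_mul, neg_inj] at hftc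
  exact eq_inv_of_mul_eq_one_right hftc

end EulerIntegral

section RadialIntegral

variable {f : ℂ → ℂ} {U : Set ℂ} {p : ℂ}

theorem intervalIntegrable_radial_mul {w : ℝ → ℂ} (hf : ContinuousOn f U)
    (hp : ∀ t ∈ Set.Icc (0 : ℝ) 1, p * t ∈ U) (hw : IntervalIntegrable w volume 0 1) :
    IntervalIntegrable (fun t : ℝ ↦ f (p * t) * w t) volume 0 1 := by
  refine hw.continuousOn_mul ?_
  rw [Set.uIcc_of_le zero_le_one]
  exact hf.comp (by fun_prop) hp

theorem exists_closedBall_radial_subset_compact (hU : IsOpen U)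
    (hp : ∀ t ∈ Set.Icc (0 : ℝ) 1, p * t ∈ U) :
    ∃ δ > 0, ∃ K ⊆ U, IsCompact K ∧
      ∀ z ∈ Metric.closedBall p δ, ∀ t ∈ Set.Icc (0 : ℝ) 1, z * t ∈ K := by
  let S : Set ℂ := (fun t : ℝ ↦ p * t) '' Set.Icc 0 1
  have hS : IsCompact S := isCompact_Icc.image (by fun_prop)
  obtain ⟨δ, hδ, hSU⟩ := hS.exists_cthickening_subset_open hU (Set.image_subset_iff.2 hp)
  refine ⟨δ, hδ, Metric.cthickening δ S, hSU, hS.cthickening, fun z hz t ht ↦ ?_⟩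
  refine Metric.mem_cthickening_of_dist_le _ (p * t) _ _ (Set.mem_image_of_mem _ ht) ?_
  calc dist (z * t) (p * t) = dist z p * t := by
        rw [dist_eq_norm, ← sub_mul, norm_mul, ← dist_eq_norm, Complex.norm_of_nonneg ht.1]
    _ ≤ dist z p := mul_le_of_le_one_right dist_nonneg ht.2
    _ ≤ δ := hz

theorem hasDerivAt_integral_radial_mul {w : ℝ → ℂ} (hU : IsOpen U) (hf : DifferentiableOn ℂ f U)
    (hp : ∀ t ∈ Set.Icc (0 : ℝ) 1, p * t ∈ U) (hw : IntervalIntegrable w volume 0 1) :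
    HasDerivAt (fun z ↦ ∫ t in (0 : ℝ)..1, f (z * t) * w t)
      (∫ t in (0 : ℝ)..1, deriv f (p * t) * (t * w t)) p := by
  obtain ⟨δ, hδ, K, hKU, hK, hball⟩ := exists_closedBall_radial_subset_compact hU hp
  have hf' : ContinuousOn (deriv f) U := (hf.deriv hU).continuousOn
  obtain ⟨C, hC⟩ := hK.exists_bound_of_continuousOn (hf'.mono hKU)
  have hIcc : ∀ t ∈ Set.uIoc (0 : ℝ) 1, t ∈ Set.Icc (0 : ℝ) 1 := fun t ht ↦
    Set.Ioc_subset_Icc_self (Set.uIoc_of_le (zero_le_one (α := ℝ)) ▸ ht)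
  have hint : ∀ z ∈ Metric.closedBall p δ,
      IntervalIntegrable (fun t : ℝ ↦ f (z * t) * w t) volume 0 1 := fun z hz ↦
    intervalIntegrable_radial_mul hf.continuousOn (fun t ht ↦ hKU (hball z hz t ht)) hw
  have hint' : IntervalIntegrable (fun t : ℝ ↦ deriv f (p * t) * (t * w t)) volume 0 1 :=
    intervalIntegrable_radial_mul hf' hp (hw.continuousOn_mul (by fun_prop))
  refine (intervalIntegral.hasDerivAt_integral_of_dominated_loc_of_deriv_le
    (F' := fun z t ↦ deriv f (z * t) * (t * w t)) (bound := fun t ↦ C * ‖w t‖)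
    (Metric.closedBall_mem_nhds p hδ) ?_ (hint p (Metric.mem_closedBall_self hδ.le))
    hint'.aestronglyMeasurable_restrict_uIoc ?_ (hw.norm.const_mul C) ?_).2
  · filter_upwards [Metric.closedBall_mem_nhds p hδ] with z hz
    exact (hint z hz).aestronglyMeasurable_restrict_uIoc
  · refine .of_forall fun t ht z hz ↦ ?_
    have htC : ‖(t : ℂ) * w t‖ ≤ ‖w t‖ := by
      rw [norm_mul, Complex.norm_of_nonneg (hIcc t ht).1]
      exact mul_le_of_le_one_left (norm_nonneg _) (hIcc t ht).2
    have hC' := hC _ (hball z hz t (hIcc t ht))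
    rw [norm_mul]
    exact mul_le_mul hC' htC (norm_nonneg _) ((norm_nonneg _).trans hC')
  · refine .of_forall fun t ht z hz ↦ ?_
    have hfz := (hf.differentiableAt (hU.mem_nhds (hKU (hball z hz t (hIcc t ht))))).hasDerivAt
    exact ((hfz.comp z (hasDerivAt_mul_const (t : ℂ))).mul_const (w t)).congr_deriv
      (mul_assoc _ _ _)

end RadialIntegral

section Operator

theorem Gop_comp_mul_right (f : ℂ → ℂ) (c p : ℂ) :
    Gop (fun z ↦ f (z * c)) p = Gop f (p * c) := by
  simp only [Gop, mul_right_comm]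

theorem Aop_comp_mul_right (f : ℂ → ℂ) (c p : ℂ) :
    Aop (fun z ↦ f (z * c)) p = Aop f (p * c) := by
  have hG : Gop (fun z ↦ f (z * c)) = fun z ↦ Gop f (c * z) := by
    funext z
    rw [Gop_comp_mul_right, mul_comm]
  rw [Aop, Aop, Gop_comp_mul_right, hG, deriv_comp_mul_left, smul_eq_mul, mul_comm c p, mul_assoc]

theorem ofReal_one_sub_rpow_neg_half {t : ℝ} (ht : t ≤ 1) :
    (((1 - t) ^ (-(1 / 2) : ℝ) : ℝ) : ℂ) = (1 - (t : ℂ)) ^ ((1 / 2 : ℂ) - 1) := by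
  rw [Complex.ofReal_cpow (sub_nonneg.2 ht)]
  norm_num

theorem intervalIntegrable_ofReal_one_sub_rpow_neg_half :
    IntervalIntegrable (fun t : ℝ ↦ (((1 - t) ^ (-(1 / 2) : ℝ) : ℝ) : ℂ)) volume 0 1 := by
  refine (intervalIntegrable_one_sub_cpow (a := 1 / 2) (by norm_num)).congr fun t ht ↦ ?_
  rw [Set.uIoc_of_le zero_le_one] at ht
  exact (ofReal_one_sub_rpow_neg_half ht.2).symm

theorem Aop_eq_integral {f : ℂ → ℂ} {U : Set ℂ} {p : ℂ} (hU : IsOpen U)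
    (hf : DifferentiableOn ℂ f U) (hp : ∀ t ∈ Set.Icc (0 : ℝ) 1, p * t ∈ U) :
    Aop f p = ∫ t in (0 : ℝ)..1, (f (p * t) / 2 + p * t * deriv f (p * t)) *
      (1 - (t : ℂ)) ^ ((1 / 2 : ℂ) - 1) := by
  have hw := intervalIntegrable_ofReal_one_sub_rpow_neg_half
  have hderiv : HasDerivAt (Gop f) _ p := hasDerivAt_integral_radial_mul hU hf hp hw
  have hint := intervalIntegrable_radial_mul hf.continuousOn hp hw
  have hint' := intervalIntegrable_radial_mul (hf.deriv hU).continuousOn hp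
    (hw.continuousOn_mul Complex.continuous_ofReal.continuousOn)
  rw [Aop, hderiv.deriv, Gop, ← intervalIntegral.integral_div,
    ← intervalIntegral.integral_const_mul,
    ← intervalIntegral.integral_add (hint.div_const 2) (hint'.const_mul p)]
  refine intervalIntegral.integral_congr fun t ht ↦ ?_
  rw [Set.uIcc_of_le zero_le_one] at ht
  simp only [ofReal_one_sub_rpow_neg_half ht.2]
  ring

end Operator

section InverseSqrt

theorem hasDerivAt_one_sub_cpow {z : ℂ} (hz : 1 - z ∈ Complex.slitPlane) (c : ℂ) :
    HasDerivAt (fun v : ℂ ↦ (1 - v) ^ c) (-(c * (1 - z) ^ (c - 1))) z :=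
  (((hasDerivAt_id z).const_sub 1).cpow_const hz).congr_deriv (mul_neg_one _)

theorem half_inverse_sqrt_add_mul_deriv {z : ℂ} (hz : 1 - z ∈ Complex.slitPlane) :
    (1 - z) ^ (-(1 / 2) : ℂ) / 2 + z * deriv (fun v : ℂ ↦ (1 - v) ^ (-(1 / 2) : ℂ)) z =
      (1 - z) ^ (-(1 / 2) - 1 : ℂ) / 2 := by
  rw [(hasDerivAt_one_sub_cpow hz _).deriv, ← cpow_sub_one_mul (Complex.slitPlane_ne_zero hz)]
  ring

theorem Aop_inverse_sqrt {u : ℂ} (hu : 1 - u ∈ Complex.slitPlane) :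
    Aop (fun z ↦ (1 - z) ^ (-(1 / 2) : ℂ)) u = (1 - u)⁻¹ := by
  have hU : IsOpen {z : ℂ | 1 - z ∈ Complex.slitPlane} :=
    Complex.isOpen_slitPlane.preimage (continuous_const.sub continuous_id)
  have hf : DifferentiableOn ℂ (fun z ↦ (1 - z) ^ (-(1 / 2) : ℂ))
      {z | 1 - z ∈ Complex.slitPlane} := fun z hz ↦
    (hasDerivAt_one_sub_cpow hz _).differentiableAt.differentiableWithinAt
  have hseg : ∀ t ∈ Set.Icc (0 : ℝ) 1, 1 - u * t ∈ Complex.slitPlane := fun _ ↦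
    one_sub_mul_ofReal_mem_slitPlane hu
  calc Aop (fun z ↦ (1 - z) ^ (-(1 / 2) : ℂ)) u
      = ∫ t in (0 : ℝ)..1,
          (1 - u * t) ^ (-(1 / 2) - 1 : ℂ) * (1 - (t : ℂ)) ^ ((1 / 2 : ℂ) - 1) / 2 := by
        rw [Aop_eq_integral hU hf hseg]
        refine intervalIntegral.integral_congr fun t ht ↦ ?_
        rw [Set.uIcc_of_le zero_le_one] at ht
        simp only [half_inverse_sqrt_add_mul_deriv (hseg t ht), div_mul_eq_mul_div]
    _ = (1 / 2 * (1 - u))⁻¹ / 2 := by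
        rw [intervalIntegral.integral_div,
          integral_one_sub_mul_cpow_mul_one_sub_cpow (by norm_num) hu]
    _ = (1 - u)⁻¹ := by
        rw [mul_inv]
        ring

theorem Aop_of_inverse_sqrt_general (x : ℂ) :
    AnalyticOnNhd ℂ (fun p : ℂ ↦ (1 - p * x) ^ (-(1 / 2) : ℂ))
      {p | 1 - p * x ∈ Complex.slitPlane} ∧
    ∀ p : ℂ, 1 - p * x ∈ Complex.slitPlane →
      Aop (fun p : ℂ ↦ (1 - p * x) ^ (-(1 / 2) : ℂ)) p = (1 - p * x)⁻¹ := by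
  refine ⟨fun p hp ↦ ?_, fun p hp ↦ ?_⟩
  · have hlin : AnalyticAt ℂ (fun q : ℂ ↦ 1 - q * x) p := by fun_prop
    exact hlin.cpow analyticAt_const hp
  · rw [Aop_comp_mul_right (fun z ↦ (1 - z) ^ (-(1 / 2) : ℂ)), Aop_inverse_sqrt hp]

end InverseSqrt

/-- for `x ∈ [−1,1]`, `f_x(p) = (1−px)^{−1/2}` (principal branch) is analytic
on `Ω` and `(A f_x)(p) = (1−px)^{−1}` for all `p ∈ Ω`. -/
theorem Aop_of_inverse_sqrt
    (x : ℝ) (hx : x ∈ Set.Icc (-1:ℝ) 1) :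
    AnalyticOnNhd ℂ (fun p : ℂ => ((1:ℂ) - p * (x:ℂ)) ^ (-(1/2) : ℂ)) Omega ∧
    ∀ p ∈ Omega,
      Aop (fun p : ℂ => ((1:ℂ) - p * (x:ℂ)) ^ (-(1/2) : ℂ)) p = ((1:ℂ) - p * (x:ℂ))⁻¹ := by
  have hΩ := fun p (hp : p ∈ Omega) ↦ one_sub_mul_mem_slitPlane_of_mem_Omega hx hp
  exact (Aop_of_inverse_sqrt_general x).imp (·.mono hΩ) fun h p hp ↦ h p (hΩ p hp)
end

section
/- Let Ω := ℂ ∖ ((−∞,−1] ∪ [1,∞)), let μ : [−1,1] → ℝ be bounded and measurable, and define Q(p) := ∫_{−1}^1 μ(x)(1 − px)^{−1/2} dx for p ∈ Ω (principal branch). Then Q is analytic on Ω, AQ is analytic on Ω, and (AQ)(p) = ∫_{−1}^1 μ(x)(1 − px)^{−1} dx for every p ∈ Ω. -/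
open MeasureTheory Filter Topology

/-!
Differentiation gives `p · d/dp (1 - ps)^a = a ((1 - ps)^a - (1 - ps)^(a-1))`, so `c + p · d/dp`
turns a superposition of the functions `(1 - ps)^(-c)`, `s ∈ [-1, 1]`, into `c` times the same
superposition of `(1 - ps)^(-c-1)`. By Fubini the mean `∫₀¹ f(pt) (1 - t)^(c-1) dt` of a
superposition is again a superposition, with `ts` in place of `s`, and the remaining `t`-integral
is elementary: `(1 - t)^c (1 - zt)^(-c)` is a primitive of
`-c (1 - z) (1 - t)^(c-1) (1 - zt)^(-c-1)`. The operator `A` is the case `c = 1/2`.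
-/

lemma one_sub_mul_mem_slitPlane {p : ℂ} (hp : p ∈ Omega) {s : ℝ} (hs : s ∈ Set.Icc (-1) 1) :
    1 - p * s ∈ Complex.slitPlane := by
  by_contra hslit
  obtain ⟨hre, him⟩ : 1 ≤ p.re * s ∧ (p.im = 0 ∨ s = 0) := by
    simpa [Complex.mem_slitPlane_iff, or_iff_not_imp_left] using hslit
  have hs0 : s ≠ 0 := by
    rintro rfl
    norm_num at hre
  refine hp ⟨p.re, ?_, Complex.ext rfl (him.resolve_right hs0).symm⟩
  rcases hs0.lt_or_gt with hneg | hpos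
  · exact .inl (show p.re ≤ -1 by nlinarith [hs.1])
  · exact .inr (show 1 ≤ p.re by nlinarith [hs.2])

theorem mem_Omega_iff {p : ℂ} :
    p ∈ Omega ↔ ∀ s ∈ Set.Icc (-1 : ℝ) 1, 1 - p * s ∈ Complex.slitPlane := by
  refine ⟨fun hp _ hs => one_sub_mul_mem_slitPlane hp hs, ?_⟩
  rintro hslit ⟨r, hr, rfl⟩
  have hr1 : 1 ≤ |r| := le_abs'.2 hr
  have hr0 : (r : ℂ) ≠ 0 := Complex.ofReal_ne_zero.2 (abs_pos.1 (one_pos.trans_le hr1))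
  have hinv : |r⁻¹| ≤ 1 := abs_inv r ▸ inv_le_one_of_one_le₀ hr1
  simpa [hr0] using hslit r⁻¹ (abs_le.1 hinv)

lemma isOpen_Omega : IsOpen Omega :=
  (Complex.isometry_ofReal.isClosedEmbedding.isClosedMap _
    (isClosed_Iic.union isClosed_Ici)).isOpen_compl

lemma mul_mem_Icc_neg_one_one {t s : ℝ} (ht : t ∈ Set.Icc 0 1) (hs : s ∈ Set.Icc (-1) 1) :
    t * s ∈ Set.Icc (-1) 1 := by
  constructor <;> nlinarith [ht.1, ht.2, hs.1, hs.2]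

lemma mul_ofReal_mem_Omega {p : ℂ} (hp : p ∈ Omega) {t : ℝ} (ht : t ∈ Set.Icc 0 1) :
    p * t ∈ Omega :=
  mem_Omega_iff.2 fun s hs => by
    simpa [mul_assoc] using one_sub_mul_mem_slitPlane hp (mul_mem_Icc_neg_one_one ht hs)

lemma exists_norm_one_sub_mul_cpow_le {K : Set ℂ} (hK : IsCompact K) (hKΩ : K ⊆ Omega) (a : ℂ) :
    ∃ C, ∀ q ∈ K, ∀ s ∈ Set.Icc (-1 : ℝ) 1, ‖(1 - q * s) ^ a‖ ≤ C := by
  have hcont : ContinuousOn (fun y : ℂ × ℝ => (1 - y.1 * y.2) ^ a) (K ×ˢ Set.Icc (-1) 1) :=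
    ContinuousOn.cpow_const (by fun_prop) fun y hy => one_sub_mul_mem_slitPlane (hKΩ hy.1) hy.2
  obtain ⟨C, hC⟩ := (hK.prod isCompact_Icc).exists_bound_of_continuousOn hcont
  exact ⟨C, fun q hq s hs => hC (q, s) ⟨hq, hs⟩⟩

lemma cpow_eq_mul_cpow_sub_one {z : ℂ} (hz : z ≠ 0) (a : ℂ) : z ^ a = z * z ^ (a - 1) := by
  rw [Complex.cpow_sub _ _ hz, Complex.cpow_one, mul_div_cancel₀ _ hz]

/-- The superposition `∫ m(y) (1 - p s(y))^a dν(y)` of powers. The nodes `s` are functions on an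
arbitrary space, rather than the points of `[-1, 1]`, so that averaging over `p t` with
`t ∈ [0, 1]` stays within this class. -/
noncomputable def cpowPotential {Y : Type*} [MeasurableSpace Y] (ν : Measure Y) (m : Y → ℂ)
    (s : Y → ℝ) (a p : ℂ) : ℂ :=
  ∫ y, m y * (1 - p * s y) ^ a ∂ν

/-- Integrable densities `m` with nodes `s` in `[-1, 1]`: the data whose `cpowPotential` is analytic
on `Omega` for every exponent. -/
structure IsPotentialData {Y : Type*} [MeasurableSpace Y] (ν : Measure Y) (m : Y → ℂ)
    (s : Y → ℝ) : Prop where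
  integrable : Integrable m ν
  aemeasurable : AEMeasurable s ν
  ae_mem_Icc : ∀ᵐ y ∂ν, s y ∈ Set.Icc (-1) 1

namespace IsPotentialData

variable {Y : Type*} [MeasurableSpace Y] {ν : Measure Y} {m : Y → ℂ} {s : Y → ℝ} {p : ℂ}

lemma integrable_mul_cpow (h : IsPotentialData ν m s) (a : ℂ) (hp : p ∈ Omega) :
    Integrable (fun y => m y * (1 - p * s y) ^ a) ν := by
  have hs := h.aemeasurable
  obtain ⟨C, hC⟩ := exists_norm_one_sub_mul_cpow_le isCompact_singleton
    (Set.singleton_subset_iff.2 hp) a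
  refine h.integrable.mul_bdd (c := C) (AEMeasurable.aestronglyMeasurable (by fun_prop)) ?_
  filter_upwards [h.ae_mem_Icc] with y hy using hC p rfl _ hy

lemma mul_nodes (h : IsPotentialData ν m s) : IsPotentialData ν (fun y => m y * s y) s where
  integrable := by
    have hs := h.aemeasurable
    refine h.integrable.mul_bdd (c := 1) (AEMeasurable.aestronglyMeasurable (by fun_prop)) ?_
    filter_upwards [h.ae_mem_Icc] with y hy
    simpa using abs_le.2 hy
  aemeasurable := h.aemeasurable
  ae_mem_Icc := h.ae_mem_Icc

lemma hasDerivAt_cpowPotential (h : IsPotentialData ν m s) (a : ℂ) (hp : p ∈ Omega) :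
    HasDerivAt (cpowPotential ν m s a)
      (-a * cpowPotential ν (fun y => m y * s y) s (a - 1) p) p := by
  obtain ⟨ε, hε, hball⟩ := Metric.nhds_basis_closedBall.mem_iff.1 (isOpen_Omega.mem_nhds hp)
  obtain ⟨C, hC⟩ := exists_norm_one_sub_mul_cpow_le (isCompact_closedBall p ε) hball (a - 1)
  have hderiv : ∀ᵐ y ∂ν, ∀ q ∈ Metric.closedBall p ε,
      HasDerivAt (fun q => m y * (1 - q * s y) ^ a)
        (-a * (m y * s y * (1 - q * s y) ^ (a - 1))) q := by
    filter_upwards [h.ae_mem_Icc] with y hy q hq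
    have hlin : HasDerivAt (fun q : ℂ => 1 - q * s y) (-(s y : ℂ)) q := by
      simpa using ((hasDerivAt_id q).mul_const (s y : ℂ)).const_sub 1
    refine ((hlin.cpow_const (one_sub_mul_mem_slitPlane (hball hq) hy)).const_mul
      (m y)).congr_deriv ?_
    ring
  have hbound : ∀ᵐ y ∂ν, ∀ q ∈ Metric.closedBall p ε,
      ‖-a * (m y * s y * (1 - q * s y) ^ (a - 1))‖ ≤ ‖a‖ * (‖m y * s y‖ * C) := by
    filter_upwards [h.ae_mem_Icc] with y hy q hq
    rw [norm_mul, norm_neg, norm_mul (m y * s y)]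
    gcongr
    exact hC q hq _ hy
  rw [cpowPotential, ← integral_const_mul]
  refine (hasDerivAt_integral_of_dominated_loc_of_deriv_le (Metric.closedBall_mem_nhds p hε) ?_
    (h.integrable_mul_cpow a hp)
    ((h.mul_nodes.integrable_mul_cpow (a - 1) hp).const_mul (-a)).aestronglyMeasurable hbound
    ((h.mul_nodes.integrable.norm.mul_const C).const_mul ‖a‖) hderiv).2
  filter_upwards [isOpen_Omega.mem_nhds hp] with q hq
  exact (h.integrable_mul_cpow a hq).aestronglyMeasurable

lemma analyticOnNhd_cpowPotential (h : IsPotentialData ν m s) (a : ℂ) :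
    AnalyticOnNhd ℂ (cpowPotential ν m s a) Omega :=
  DifferentiableOn.analyticOnNhd
    (fun _ hp => (h.hasDerivAt_cpowPotential a hp).differentiableAt.differentiableWithinAt)
    isOpen_Omega

lemma mul_deriv_cpowPotential (h : IsPotentialData ν m s) (a : ℂ) (hp : p ∈ Omega) :
    p * deriv (cpowPotential ν m s a) p =
      a * (cpowPotential ν m s a p - cpowPotential ν m s (a - 1) p) := by
  have hEuler : ∀ᵐ y ∂ν, -p * (m y * s y * (1 - p * s y) ^ (a - 1)) =
      m y * (1 - p * s y) ^ a - m y * (1 - p * s y) ^ (a - 1) := by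
    filter_upwards [h.ae_mem_Icc] with y hy
    rw [cpow_eq_mul_cpow_sub_one
      (Complex.slitPlane_ne_zero (one_sub_mul_mem_slitPlane hp hy)) a]
    ring
  rw [(h.hasDerivAt_cpowPotential a hp).deriv]
  simp only [cpowPotential]
  rw [← integral_sub (h.integrable_mul_cpow a hp) (h.integrable_mul_cpow (a - 1) hp),
    ← integral_congr_ae hEuler, integral_const_mul]
  ring

end IsPotentialData

/-- The kernel `(1 - t)^(c-1)` of fractional integration of order `c` over `[0, 1]`, as a complex
number. -/
noncomputable def abelKernel (c t : ℝ) : ℂ :=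
  ((1 - t) ^ (c - 1) : ℝ)

/-- The mean `∫₀¹ f(pt) (1 - t)^(c-1) dt`, which is `Gop f p` for `c = 1/2`. -/
noncomputable def abelMean (c : ℝ) (f : ℂ → ℂ) (p : ℂ) : ℂ :=
  ∫ t in (0 : ℝ)..1, f (p * t) * abelKernel c t

lemma Gop_eq_abelMean : Gop = abelMean (1 / 2) := by
  ext f p
  norm_num [Gop, abelMean, abelKernel]

lemma intervalIntegrable_abelKernel {c : ℝ} (hc : 0 < c) :
    IntervalIntegrable (abelKernel c) volume 0 1 := by
  have hpow : IntervalIntegrable (fun t : ℝ => t ^ (c - 1)) volume 0 1 :=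
    intervalIntegral.intervalIntegrable_rpow' (by linarith)
  have hreflect : IntervalIntegrable (fun t : ℝ => (1 - t) ^ (c - 1)) volume 0 1 := by
    simpa using (hpow.comp_sub_left 1).symm
  rw [intervalIntegrable_iff] at hreflect ⊢
  exact hreflect.ofReal

lemma hasDerivAt_one_sub_rpow_mul_cpow (c : ℝ) {z : ℂ} {t : ℝ} (ht : t < 1)
    (hz : 1 - z * t ∈ Complex.slitPlane) :
    HasDerivAt (fun t : ℝ => (((1 - t) ^ c : ℝ) : ℂ) * (1 - z * t) ^ (-c : ℂ))
      (-(c * (1 - z)) * (abelKernel c t * (1 - z * t) ^ (-c - 1 : ℂ))) t := by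
  have hpos : 0 < 1 - t := sub_pos.2 ht
  have hreal : HasDerivAt (fun t : ℝ => (1 - t) ^ c) (-1 * c * (1 - t) ^ (c - 1)) t :=
    ((hasDerivAt_id t).const_sub 1).rpow_const (.inl hpos.ne')
  have hlin : HasDerivAt (fun q : ℂ => 1 - z * q) (-z) (t : ℂ) := by
    simpa using ((hasDerivAt_id (t : ℂ)).const_mul z).const_sub 1
  have hcpow := (hlin.cpow_const (c := (-c : ℂ)) hz).comp_ofReal
  have hsplit : (1 - t) ^ c = (1 - t) * (1 - t) ^ (c - 1) := by
    rw [Real.rpow_sub_one hpos.ne', mul_div_cancel₀ _ hpos.ne']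
  refine (hreal.ofReal_comp.mul hcpow).congr_deriv ?_
  rw [abelKernel, cpow_eq_mul_cpow_sub_one (Complex.slitPlane_ne_zero hz) (-c), hsplit]
  push_cast
  ring

theorem integral_abelKernel_mul_cpow {c : ℝ} (hc : 0 < c) {z : ℂ}
    (hz : ∀ t ∈ Set.Icc (0 : ℝ) 1, 1 - z * t ∈ Complex.slitPlane) :
    c * ∫ t in (0 : ℝ)..1, abelKernel c t * (1 - z * t) ^ (-c - 1 : ℂ) = (1 - z)⁻¹ := by
  have hcont (a : ℂ) : ContinuousOn (fun t : ℝ => (1 - z * t) ^ a) (Set.Icc 0 1) :=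
    ContinuousOn.cpow_const (by fun_prop) hz
  have hint : IntervalIntegrable (fun t : ℝ => abelKernel c t * (1 - z * t) ^ (-c - 1 : ℂ))
      volume 0 1 :=
    (intervalIntegrable_abelKernel hc).mul_continuousOn
      (by simpa only [Set.uIcc_of_le zero_le_one] using hcont _)
  have hrpow : Continuous fun t : ℝ => (((1 - t) ^ c : ℝ) : ℂ) :=
    Complex.continuous_ofReal.comp
      ((continuous_const.sub continuous_id).rpow_const fun _ => .inr hc.le)
  have hftc : -(c * (1 - z)) *
      ∫ t in (0 : ℝ)..1, abelKernel c t * (1 - z * t) ^ (-c - 1 : ℂ) = -1 := by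
    rw [← intervalIntegral.integral_const_mul,
      intervalIntegral.integral_eq_sub_of_hasDerivAt_of_le zero_le_one
        (hrpow.continuousOn.mul (hcont _))
        (fun t ht => hasDerivAt_one_sub_rpow_mul_cpow c ht.2 (hz t (Set.Ioo_subset_Icc_self ht)))
        (hint.const_mul _)]
    simp [Real.zero_rpow hc.ne']
  apply eq_inv_of_mul_eq_one_left
  linear_combination -hftc

lemma ae_restrict_Ioc_mem_Icc (a b : ℝ) :
    ∀ᵐ t ∂volume.restrict (Set.Ioc a b), t ∈ Set.Icc a b := by
  filter_upwards [ae_restrict_mem measurableSet_Ioc] with t ht using Set.Ioc_subset_Icc_self ht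

section AbelMean

variable {Y : Type*} [MeasurableSpace Y] {ν : Measure Y} {m : Y → ℂ} {s : Y → ℝ} {c : ℝ} {p : ℂ}

/-- The potential on `(0, 1] × Y` with density `(1 - t)^(c-1) m(y)` and nodes `t s(y)`, which
represents the `abelMean` of the potential of `m` and `s`. -/
noncomputable def abelPotential (c : ℝ) (ν : Measure Y) (m : Y → ℂ) (s : Y → ℝ) : ℂ → ℂ → ℂ :=
  cpowPotential ((volume.restrict (Set.Ioc 0 1)).prod ν) (fun y => abelKernel c y.1 * m y.2)
    (fun y => y.1 * s y.2)

namespace IsPotentialData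

lemma prod_abelKernel (h : IsPotentialData ν m s) (hc : 0 < c) :
    IsPotentialData ((volume.restrict (Set.Ioc 0 1)).prod ν)
      (fun y => abelKernel c y.1 * m y.2) (fun y => y.1 * s y.2) where
  integrable :=
    ((intervalIntegrable_iff_integrableOn_Ioc_of_le zero_le_one).1
      (intervalIntegrable_abelKernel hc)).mul_prod h.integrable
  aemeasurable := measurable_fst.aemeasurable.mul h.aemeasurable.comp_snd
  ae_mem_Icc := by
    filter_upwards [Measure.quasiMeasurePreserving_fst.ae (ae_restrict_Ioc_mem_Icc 0 1),
      Measure.quasiMeasurePreserving_snd.ae h.ae_mem_Icc] with y ht hs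
    exact mul_mem_Icc_neg_one_one ht hs

variable [SFinite ν]

lemma eqOn_abelMean_abelPotential (h : IsPotentialData ν m s) (hc : 0 < c) {a : ℂ} {f : ℂ → ℂ}
    (hf : Set.EqOn f (cpowPotential ν m s a) Omega) :
    Set.EqOn (abelMean c f) (abelPotential c ν m s a) Omega := by
  intro p hp
  rw [abelMean, abelPotential, cpowPotential,
    integral_prod _ ((h.prod_abelKernel hc).integrable_mul_cpow a hp),
    intervalIntegral.integral_of_le zero_le_one]
  apply integral_congr_ae
  filter_upwards [ae_restrict_Ioc_mem_Icc 0 1] with t ht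
  rw [hf (mul_ofReal_mem_Omega hp ht), cpowPotential, ← integral_mul_const]
  congr! 2
  push_cast
  ring_nf

lemma mul_abelPotential_neg_sub_one (h : IsPotentialData ν m s) (hc : 0 < c) (hp : p ∈ Omega) :
    c * abelPotential c ν m s (-c - 1) p = cpowPotential ν m s (-1) p := by
  have hinner : ∀ᵐ y ∂ν, (c : ℂ) * ∫ t in Set.Ioc (0 : ℝ) 1,
      abelKernel c t * m y * (1 - p * (t * s y : ℝ)) ^ (-c - 1 : ℂ) =
        m y * (1 - p * s y) ^ (-1 : ℂ) := by
    filter_upwards [h.ae_mem_Icc] with y hy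
    have hslit : ∀ t ∈ Set.Icc (0 : ℝ) 1, 1 - p * s y * t ∈ Complex.slitPlane := fun t ht => by
      simpa [mul_comm, mul_left_comm] using
        one_sub_mul_mem_slitPlane (mul_ofReal_mem_Omega hp ht) hy
    rw [Complex.cpow_neg_one, ← integral_abelKernel_mul_cpow hc hslit,
      intervalIntegral.integral_of_le zero_le_one, mul_left_comm, ← integral_const_mul (m y)]
    congr! 3
    push_cast
    ring_nf
  rw [abelPotential, cpowPotential,
    integral_prod_symm _ ((h.prod_abelKernel hc).integrable_mul_cpow _ hp), ← integral_const_mul]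
  exact integral_congr_ae hinner

theorem mul_abelMean_add_mul_deriv_abelMean (h : IsPotentialData ν m s) (hc : 0 < c) {f : ℂ → ℂ}
    (hf : Set.EqOn f (cpowPotential ν m s (-c)) Omega) (hp : p ∈ Omega) :
    c * abelMean c f p + p * deriv (abelMean c f) p = cpowPotential ν m s (-1) p := by
  have hmean := h.eqOn_abelMean_abelPotential hc hf
  have hEuler : p * deriv (abelPotential c ν m s (-c)) p =
      -c * (abelPotential c ν m s (-c) p - abelPotential c ν m s (-c - 1) p) :=
    (h.prod_abelKernel hc).mul_deriv_cpowPotential (-c) hp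
  rw [(hmean.eventuallyEq_of_mem (isOpen_Omega.mem_nhds hp)).deriv_eq, hmean hp, hEuler,
    ← h.mul_abelPotential_neg_sub_one hc hp]
  ring

end IsPotentialData

end AbelMean

theorem Aop_of_sqrt_potential_general {Y : Type*} [MeasurableSpace Y] {ν : Measure Y} [SFinite ν]
    {m : Y → ℂ} (hm : Integrable m ν) {s : Y → ℝ} (hs : AEMeasurable s ν)
    (hs_mem : ∀ᵐ y ∂ν, s y ∈ Set.Icc (-1) 1) {Q : ℂ → ℂ}
    (hQ : ∀ p ∈ Omega, Q p = ∫ y, m y * (1 - p * s y) ^ (-(1 / 2) : ℂ) ∂ν) :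
    AnalyticOnNhd ℂ Q Omega ∧
    AnalyticOnNhd ℂ (Aop Q) Omega ∧
    ∀ p ∈ Omega, Aop Q p = ∫ y, m y * (1 - p * s y)⁻¹ ∂ν := by
  have h : IsPotentialData ν m s := ⟨hm, hs, hs_mem⟩
  have hA : Set.EqOn (Aop Q) (cpowPotential ν m s (-1)) Omega := fun p hp => by
    have hmean := h.mul_abelMean_add_mul_deriv_abelMean (c := 1 / 2) (f := Q) one_half_pos
      (fun q hq => by simpa [cpowPotential] using hQ q hq) hp
    rw [← hmean, Aop, Gop_eq_abelMean]
    push_cast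
    ring
  refine ⟨(h.analyticOnNhd_cpowPotential _).congr isOpen_Omega fun p hp => (hQ p hp).symm,
    (h.analyticOnNhd_cpowPotential _).congr isOpen_Omega hA.symm, fun p hp => ?_⟩
  simpa only [cpowPotential, Complex.cpow_neg_one] using hA hp

/-- for bounded measurable `μ` on `[−1,1]` and
`Q(p) = ∫_{−1}^1 μ(x)(1−px)^{−1/2} dx` on `Ω`, both `Q` and `AQ` are analytic on `Ω`, and
`(AQ)(p) = ∫_{−1}^1 μ(x)(1−px)^{−1} dx` on `Ω`. -/
theorem Aop_of_sqrt_potential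
    (μ : ℝ → ℝ) (hμmeas : Measurable μ)
    (M : ℝ) (hμbdd : ∀ x ∈ Set.Icc (-1:ℝ) 1, |μ x| ≤ M)
    (Q : ℂ → ℂ)
    (hQ : ∀ p ∈ Omega,
        Q p = ∫ x in (-1:ℝ)..1, (μ x : ℂ) * ((1:ℂ) - p * (x:ℂ)) ^ (-(1/2) : ℂ)) :
    AnalyticOnNhd ℂ Q Omega ∧
    AnalyticOnNhd ℂ (Aop Q) Omega ∧
    ∀ p ∈ Omega,
      Aop Q p = ∫ x in (-1:ℝ)..1, (μ x : ℂ) * ((1:ℂ) - p * (x:ℂ))⁻¹ := by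
  have hmem := ae_restrict_Ioc_mem_Icc (-1) 1
  have hμ : IntegrableOn (fun x => (μ x : ℂ)) (Set.Ioc (-1) 1) :=
    Integrable.of_bound hμmeas.complex_ofReal.aestronglyMeasurable M
      (hmem.mono fun x hx => by simpa using hμbdd x hx)
  simp only [intervalIntegral.integral_of_le (neg_le_self zero_le_one : (-1 : ℝ) ≤ 1)] at hQ ⊢
  exact Aop_of_sqrt_potential_general hμ aemeasurable_id' hmem hQ
end

section
/- Let β > 1 be a non-integer real number, ε > 0, m an integer with m > β, and let P be a real polynomial with P(0) = 1 and P^{(j)}(ε) = 0 for j = 0, 1, …, m. Then lim_{k→+∞} k^β ∫_0^ε e^{−ikx} x^{β−1} P(x) dx = e^{−iπβ/2} Γ(β). -/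
open MeasureTheory Filter Topology

/-!
Replace `[0, ε]` by the other three sides of the rectangle of depth `η` below it, where
`|e^{-ikz}| = e^{k Im z}` decays. The bottom side contributes `O(e^{-ηk})`. On a vertical side
`x - it` the integral becomes a Laplace integral in `t`, and after the scaling `s = kt` dominated
convergence shows that only the order `t^{β-1}` part of the integrand at the corner survives in the
limit, weighted by `Γ(β)`. At `ε` there is no such part, because the amplitude is `o(t^{β-1})`
there. At `0` the branch `(-it)^{β-1} = (-i)^{β-1} t^{β-1}` gives
`-i (-i)^{β-1} Γ(β) = e^{-iπβ/2} Γ(β)`.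
-/

namespace OscillatoryIntegral

open Complex Set Asymptotics

variable {E : Type*} [NormedAddCommGroup E] {β η : ℝ}

section WatsonLemma

variable [NormedSpace ℝ E] {h : ℝ → E} {c : E}

lemma exists_norm_le_mul_rpow_of_tendsto (hη : 0 < η) (hh : ContinuousOn h (Ioc 0 η))
    (hlim : Tendsto (fun t => t ^ (1 - β) • h t) (𝓝[>] 0) (𝓝 c)) :
    ∃ C, 0 ≤ C ∧ ∀ t ∈ Ioc 0 η, ‖h t‖ ≤ C * t ^ (β - 1) := by
  have hext : ContinuousOn (Function.update (fun t => t ^ (1 - β) • h t) 0 c) (Icc 0 η) := by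
    rw [continuousOn_update_iff, Icc_sdiff_left]
    refine ⟨ContinuousOn.smul (fun t ht => ?_) hh, fun _ => ?_⟩
    · exact (Real.continuousAt_rpow_const t _ (.inl ht.1.ne')).continuousWithinAt
    · rwa [nhdsWithin_Ioc_eq_nhdsGT hη]
  obtain ⟨C, hC⟩ := isCompact_Icc.exists_bound_of_continuousOn hext
  refine ⟨C, (norm_nonneg _).trans (hC 0 ⟨le_rfl, hη.le⟩), fun t ht => ?_⟩
  have hCt : ‖t ^ (1 - β) • h t‖ ≤ C := by
    simpa [Function.update_of_ne ht.1.ne'] using hC t ⟨ht.1.le, ht.2⟩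
  rwa [norm_smul, Real.norm_of_nonneg (Real.rpow_nonneg ht.1.le _), ← neg_sub β 1,
    Real.rpow_neg ht.1.le, inv_mul_le_iff₀ (Real.rpow_pos_of_pos ht.1 _), mul_comm] at hCt

lemma rpow_smul_integral_exp_neg_mul_smul_eq {k : ℝ} (hk : 0 < k) (hη : 0 ≤ η) :
    k ^ β • ∫ t in (0 : ℝ)..η, Real.exp (-(k * t)) • h t =
      ∫ s in Ioi (0 : ℝ), (Ioc 0 (k * η)).indicator
        (fun s => Real.exp (-s) • k ^ (β - 1) • h (s / k)) s := by
  have hscale := intervalIntegral.smul_integral_comp_mul_left (a := 0) (b := η)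
    (fun s => Real.exp (-s) • k ^ (β - 1) • h (s / k)) k
  rw [mul_zero] at hscale
  rw [setIntegral_indicator measurableSet_Ioc, inter_eq_right.2 Ioc_subset_Ioi_self,
    ← intervalIntegral.integral_of_le (by positivity), ← hscale]
  simp only [mul_div_cancel_left₀ _ hk.ne', smul_comm _ (k ^ (β - 1)),
    intervalIntegral.integral_smul]
  rw [smul_smul, Real.rpow_sub_one hk.ne', div_mul_cancel₀ _ hk.ne']

lemma norm_rpow_sub_one_smul_comp_div_le {C k s : ℝ}
    (hC : ∀ t ∈ Ioc 0 η, ‖h t‖ ≤ C * t ^ (β - 1)) (hk : 0 < k) (hs : s ∈ Ioc 0 (k * η)) :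
    ‖k ^ (β - 1) • h (s / k)‖ ≤ s ^ (β - 1) * C := by
  have hsk : s / k ∈ Ioc 0 η := ⟨div_pos hs.1 hk, (div_le_iff₀' hk).2 hs.2⟩
  calc ‖k ^ (β - 1) • h (s / k)‖ = k ^ (β - 1) * ‖h (s / k)‖ := by
        rw [norm_smul, Real.norm_of_nonneg (by positivity)]
    _ ≤ k ^ (β - 1) * (C * (s / k) ^ (β - 1)) := by gcongr; exact hC _ hsk
    _ = s ^ (β - 1) * C := by rw [Real.div_rpow hs.1.le hk.le]; field_simp

lemma tendsto_rpow_sub_one_smul_comp_div {s : ℝ} (hs : 0 < s)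
    (hlim : Tendsto (fun t => t ^ (1 - β) • h t) (𝓝[>] 0) (𝓝 c)) :
    Tendsto (fun k : ℝ => k ^ (β - 1) • h (s / k)) atTop (𝓝 (s ^ (β - 1) • c)) := by
  have hdiv : Tendsto (fun k : ℝ => s / k) atTop (𝓝[>] 0) :=
    tendsto_nhdsWithin_iff.2 ⟨tendsto_const_nhds.div_atTop tendsto_id,
      (eventually_gt_atTop 0).mono fun k hk => div_pos hs hk⟩
  refine ((hlim.comp hdiv).const_smul (s ^ (β - 1))).congr' ?_
  filter_upwards [eventually_gt_atTop 0] with k hk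
  rw [Function.comp_apply, smul_smul, ← neg_sub β 1, Real.rpow_neg (by positivity),
    Real.div_rpow hs.le hk.le, inv_div, mul_div_cancel₀ _ (by positivity)]

/-- **Watson's lemma** (leading order). -/
theorem tendsto_rpow_smul_integral_exp_neg_mul_smul [CompleteSpace E] (hβ : 0 < β) (hη : 0 < η)
    (hh : ContinuousOn h (Ioc 0 η))
    (hlim : Tendsto (fun t => t ^ (1 - β) • h t) (𝓝[>] 0) (𝓝 c)) :
    Tendsto (fun k : ℝ => k ^ β • ∫ t in (0 : ℝ)..η, Real.exp (-(k * t)) • h t) atTop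
      (𝓝 (Real.Gamma β • c)) := by
  obtain ⟨C, hC0, hC⟩ := exists_norm_le_mul_rpow_of_tendsto hη hh hlim
  rw [Real.Gamma_eq_integral hβ, ← integral_smul_const]
  refine Tendsto.congr' ((eventually_gt_atTop 0).mono fun k hk =>
    (rpow_smul_integral_exp_neg_mul_smul_eq hk hη.le).symm) ?_
  refine tendsto_integral_filter_of_dominated_convergence
    (fun s => Real.exp (-s) * s ^ (β - 1) * C) ?measurable ?bound
    ((Real.GammaIntegral_convergent hβ).mul_const C) ?pointwise
  case measurable =>
    filter_upwards [eventually_gt_atTop 0] with k hk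
    have hcont : ContinuousOn (fun s => h (s / k)) (Ioc 0 (k * η)) :=
      hh.comp (by fun_prop) fun s hs => ⟨div_pos hs.1 hk, (div_le_iff₀' hk).2 hs.2⟩
    refine ((aestronglyMeasurable_indicator_iff measurableSet_Ioc).2
      (ContinuousOn.aestronglyMeasurable ?_ measurableSet_Ioc)).restrict
    exact ContinuousOn.smul (by fun_prop) (hcont.const_smul _)
  case bound =>
    filter_upwards [eventually_gt_atTop 0] with k hk
    filter_upwards [ae_restrict_mem measurableSet_Ioi] with s (hs : 0 < s)
    by_cases hsk : s ∈ Ioc 0 (k * η)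
    · rw [indicator_of_mem hsk, norm_smul, Real.norm_of_nonneg (by positivity), mul_assoc]
      gcongr
      exact norm_rpow_sub_one_smul_comp_div_le hC hk hsk
    · rw [indicator_of_notMem hsk, norm_zero]
      positivity
  case pointwise =>
    filter_upwards [ae_restrict_mem measurableSet_Ioi] with s (hs : 0 < s)
    rw [mul_smul]
    refine ((tendsto_rpow_sub_one_smul_comp_div hs hlim).const_smul (Real.exp (-s))).congr' ?_
    filter_upwards [eventually_ge_atTop (s / η)] with k hk
    have hsk : s ∈ Ioc 0 (k * η) := ⟨hs, (div_le_iff₀ hη).1 hk⟩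
    rw [indicator_of_mem hsk]

end WatsonLemma

section ComplexPower

lemma neg_I_cpow (s : ℂ) : (-I) ^ s = exp (-I * Real.pi * s / 2) := by
  rw [cpow_def_of_ne_zero (neg_ne_zero.2 I_ne_zero), log_neg_I]
  congr 1
  ring

lemma ofReal_mul_cpow {t : ℝ} (ht : 0 < t) {z : ℂ} (hz : z ≠ 0) (s : ℂ) :
    (t * z) ^ s = (t : ℂ) ^ s * z ^ s := by
  have ht' : (t : ℂ) ≠ 0 := ofReal_ne_zero.2 ht.ne'
  rw [cpow_def_of_ne_zero (mul_ne_zero ht' hz), log_ofReal_mul ht hz, add_mul, exp_add,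
    ofReal_log ht.le, cpow_def_of_ne_zero ht', cpow_def_of_ne_zero hz]

lemma diffContOnCl_cpow_const {s : ℂ} (hs : 0 < s.re) :
    DiffContOnCl ℂ (fun z : ℂ => z ^ s) {z | 0 < z.re} where
  differentiableOn _ hz := (differentiableAt_id.cpow_const (.inl hz)).differentiableWithinAt
  continuousOn := by
    rw [closure_setOfPred_lt_re]
    exact fun z hz => (continuousAt_cpow_const_of_re_pos (.inl hz) hs).continuousWithinAt

end ComplexPower

section Rectangle

variable [NormedSpace ℂ E] {a b : ℝ}

lemma closure_Ioo_reProdIm_Ioo_neg (hab : a < b) (hη : 0 < η) :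
    closure (Ioo a b ×ℂ Ioo (-η) 0) = Icc a b ×ℂ Icc (-η) 0 := by
  rw [closure_reProdIm, closure_Ioo hab.ne, closure_Ioo (neg_lt_zero.2 hη).ne]

lemma continuousOn_sub_mul_I_of_diffContOnCl {F : ℂ → E} (hab : a < b) (hη : 0 < η)
    (hF : DiffContOnCl ℂ F (Ioo a b ×ℂ Ioo (-η) 0)) {x : ℝ} (hx : x ∈ Icc a b) :
    ContinuousOn (fun t : ℝ => F (x - t * I)) (Icc 0 η) := by
  have hc := hF.continuousOn
  rw [closure_Ioo_reProdIm_Ioo_neg hab hη] at hc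
  refine hc.comp (by fun_prop) fun t ht => ?_
  simpa [mem_reProdIm] using And.intro hx ht.symm

lemma integral_eq_of_diffContOnCl_rectangle {F : ℂ → E} (hab : a < b) (hη : 0 < η)
    (hF : DiffContOnCl ℂ F (Ioo a b ×ℂ Ioo (-η) 0)) :
    ∫ x in a..b, F x = (∫ x in a..b, F (x - η * I)) + I • (∫ t in (0 : ℝ)..η, F (b - t * I))
      - I • ∫ t in (0 : ℝ)..η, F (a - t * I) := by
  have hc := hF.continuousOn
  rw [closure_Ioo_reProdIm_Ioo_neg hab hη] at hc
  have hboundary := integral_boundary_rect_eq_zero_of_continuousOn_of_differentiableOn F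
    (a - η * I) b
    (by simpa [uIcc_of_le, hab.le, hη.le] using hc)
    (by simpa [hab.le, hη.le] using hF.differentiableOn)
  have hvertical (x : ℝ) : ∫ y in -η..0, F (x + y * I) = ∫ t in (0 : ℝ)..η, F (x - t * I) := by
    simpa [sub_eq_add_neg] using
      (intervalIntegral.integral_comp_neg (a := 0) (b := η) fun y : ℝ => F (x + y * I)).symm
  simp only [sub_re, sub_im, ofReal_re, ofReal_im, re_ofReal_mul, im_ofReal_mul, I_re, I_im,
    mul_zero, mul_one, sub_zero, zero_sub, hvertical, ofReal_neg, neg_mul, ← sub_eq_add_neg,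
    ofReal_zero, zero_mul, add_zero] at hboundary
  rw [eq_comm, ← sub_eq_zero, ← hboundary]
  abel

end Rectangle

section Edges

variable [NormedSpace ℂ E] {a b : ℝ}

lemma norm_integral_exp_mul_smul_le (hab : a ≤ b) (k η : ℝ) (G : ℝ → E) :
    ‖∫ x in a..b, exp (-I * k * (x - η * I)) • G x‖ ≤
      Real.exp (-η * k) * ∫ x in a..b, ‖G x‖ := by
  refine (intervalIntegral.norm_integral_le_integral_norm hab).trans_eq ?_
  simp [norm_smul, norm_exp, mul_comm]

lemma tendsto_rpow_smul_integral_exp_smul_of_im_neg (hab : a ≤ b) (hη : 0 < η) (β : ℝ)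
    (G : ℝ → E) :
    Tendsto (fun k : ℝ => k ^ β • ∫ x in a..b, exp (-I * k * (x - η * I)) • G x) atTop (𝓝 0) := by
  have hdecay := (tendsto_rpow_mul_exp_neg_mul_atTop_nhds_zero β η hη).mul_const
    (∫ x in a..b, ‖G x‖)
  rw [zero_mul] at hdecay
  refine squeeze_zero_norm' ?_ hdecay
  filter_upwards [eventually_ge_atTop 0] with k hk
  rw [norm_smul, Real.norm_of_nonneg (Real.rpow_nonneg hk _), mul_assoc]
  gcongr
  exact norm_integral_exp_mul_smul_le hab k η G

lemma integral_exp_smul_eq_exp_smul_integral (k a : ℝ) (h : ℝ → E) :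
    ∫ t in (0 : ℝ)..η, exp (-I * k * (a - t * I)) • h t =
      exp (-I * k * a) • ∫ t in (0 : ℝ)..η, Real.exp (-(k * t)) • h t := by
  rw [← intervalIntegral.integral_smul]
  congr! 2 with t
  rw [← coe_smul, smul_smul, ofReal_exp, ← exp_add]
  congr 2
  push_cast
  linear_combination k * t * I_mul_I

lemma integral_exp_smul_eq_edges {g : ℂ → E} (hab : a < b) (hη : 0 < η)
    (hg : DiffContOnCl ℂ g (Ioo a b ×ℂ Ioo (-η) 0)) (k : ℝ) :
    ∫ x in a..b, exp (-I * k * x) • g x =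
      (∫ x in a..b, exp (-I * k * (x - η * I)) • g (x - η * I))
        + I • exp (-I * k * b) • (∫ t in (0 : ℝ)..η, Real.exp (-(k * t)) • g (b - t * I))
        - I • exp (-I * k * a) • ∫ t in (0 : ℝ)..η, Real.exp (-(k * t)) • g (a - t * I) := by
  have hexp : Differentiable ℂ fun z => exp (-I * k * z) := by fun_prop
  rw [integral_eq_of_diffContOnCl_rectangle hab hη (hexp.diffContOnCl.smul hg)]
  simp only [integral_exp_smul_eq_exp_smul_integral]

lemma tendsto_exp_mul_smul_zero {u : ℝ → E} (hu : Tendsto u atTop (𝓝 0)) (x : ℝ) :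
    Tendsto (fun k : ℝ => (I * exp (-I * k * x)) • u k) atTop (𝓝 0) := by
  rw [tendsto_zero_iff_norm_tendsto_zero] at hu ⊢
  simpa [norm_smul, norm_exp] using hu

theorem tendsto_rpow_smul_integral_exp_smul_sub_endpoints [CompleteSpace E] {g : ℂ → E}
    {ca cb : E} (hβ : 0 < β) (hab : a < b) (hη : 0 < η)
    (hg : DiffContOnCl ℂ g (Ioo a b ×ℂ Ioo (-η) 0))
    (ha : Tendsto (fun t : ℝ => t ^ (1 - β) • g (a - t * I)) (𝓝[>] 0) (𝓝 ca))
    (hb : Tendsto (fun t : ℝ => t ^ (1 - β) • g (b - t * I)) (𝓝[>] 0) (𝓝 cb)) :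
    Tendsto (fun k : ℝ => k ^ β • (∫ x in a..b, exp (-I * k * x) • g x)
        - ((I * exp (-I * k * b)) • Real.Gamma β • cb - (I * exp (-I * k * a)) • Real.Gamma β • ca))
      atTop (𝓝 0) := by
  have hedge {x : ℝ} (hx : x ∈ Icc a b) : ContinuousOn (fun t : ℝ => g (x - t * I)) (Ioc 0 η) :=
    (continuousOn_sub_mul_I_of_diffContOnCl hab hη hg hx).mono Ioc_subset_Icc_self
  have hleft := tendsto_sub_nhds_zero_iff.2 <|
    tendsto_rpow_smul_integral_exp_neg_mul_smul hβ hη (hedge (left_mem_Icc.2 hab.le)) ha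
  have hright := tendsto_sub_nhds_zero_iff.2 <|
    tendsto_rpow_smul_integral_exp_neg_mul_smul hβ hη (hedge (right_mem_Icc.2 hab.le)) hb
  have hbottom :=
    tendsto_rpow_smul_integral_exp_smul_of_im_neg hab.le hη β fun x => g (x - η * I)
  have hsum := (hbottom.add (tendsto_exp_mul_smul_zero hright b)).sub
    (tendsto_exp_mul_smul_zero hleft a)
  rw [add_zero, sub_zero] at hsum
  refine hsum.congr fun k => ?_
  rw [integral_exp_smul_eq_edges hab hη hg]
  simp only [smul_add, smul_sub, smul_smul, smul_comm (k ^ β)]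
  abel

end Edges

section EndpointLimits

variable [NormedSpace ℂ E] {f : ℂ → E}

lemma rpow_one_sub_mul_cpow_neg_mul_I {t : ℝ} (ht : 0 < t) :
    ((t ^ (1 - β) : ℝ) : ℂ) * (-(t * I)) ^ (β - 1 : ℂ) = (-I) ^ (β - 1 : ℂ) := by
  have hpow : ((t ^ (1 - β) : ℝ) : ℂ) * (t : ℂ) ^ (β - 1 : ℂ) = 1 := by
    rw [ofReal_cpow ht.le, ← cpow_add _ _ (ofReal_ne_zero.2 ht.ne')]
    simp
  rw [← mul_neg, ofReal_mul_cpow ht (neg_ne_zero.2 I_ne_zero), ← mul_assoc, hpow, one_mul]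

lemma tendsto_rpow_smul_cpow_smul_neg_mul_I {c : E}
    (hf : Tendsto (fun t : ℝ => f (-(t * I))) (𝓝[>] 0) (𝓝 c)) :
    Tendsto (fun t : ℝ => t ^ (1 - β) • (-(t * I)) ^ (β - 1 : ℂ) • f (-(t * I))) (𝓝[>] 0)
      (𝓝 ((-I) ^ (β - 1 : ℂ) • c)) := by
  refine (hf.const_smul _).congr' ?_
  filter_upwards [self_mem_nhdsWithin] with t ht
  rw [← coe_smul, smul_smul, rpow_one_sub_mul_cpow_neg_mul_I ht]

lemma tendsto_rpow_smul_cpow_smul_sub_mul_I {a : ℝ} (ha : 0 < a)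
    (hf : (fun t : ℝ => f (a - t * I)) =o[𝓝[>] 0] fun t => t ^ (β - 1)) (s : ℂ) :
    Tendsto (fun t : ℝ => t ^ (1 - β) • (a - t * I) ^ s • f (a - t * I)) (𝓝[>] 0) (𝓝 0) := by
  have hcpow : Tendsto (fun t : ℝ => (a - t * I : ℂ) ^ s) (𝓝[>] 0) (𝓝 ((a : ℂ) ^ s)) := by
    have hcont : ContinuousAt (fun t : ℝ => (a - t * I : ℂ) ^ s) 0 :=
      ContinuousAt.cpow (by fun_prop) continuousAt_const (by simp [mem_slitPlane_iff, ha])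
    simpa using hcont.tendsto.mono_left nhdsWithin_le_nhds
  have hlim := hcpow.smul hf.tendsto_inv_smul_nhds_zero
  rw [smul_zero] at hlim
  refine hlim.congr' ?_
  filter_upwards [self_mem_nhdsWithin] with t (ht : 0 < t)
  rw [smul_comm, ← Real.rpow_neg ht.le, neg_sub]

end EndpointLimits

section Polynomial

open Polynomial

lemma X_sub_C_pow_dvd_of_iterate_derivative_eval_eq_zero {K : Type*} [Field K] [CharZero K]
    {P : K[X]} {a : K} {n : ℕ} (hP : ∀ j < n, (derivative^[j] P).eval a = 0) :
    (X - C a) ^ n ∣ P := by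
  rcases n with _ | n
  · simp
  rcases eq_or_ne P 0 with rfl | hP0
  · exact dvd_zero _
  · exact (le_rootMultiplicity_iff hP0).1 <|
      lt_rootMultiplicity_of_isRoot_iterate_derivative hP0 fun j hj => hP j (Nat.lt_succ_of_le hj)

lemma isBigO_eval_of_iterate_derivative_eval_eq_zero {𝕜 : Type*} [NormedField 𝕜] [CharZero 𝕜]
    {P : 𝕜[X]} {a : 𝕜} {n : ℕ} (hP : ∀ j < n, (derivative^[j] P).eval a = 0) :
    (fun z => P.eval z) =O[𝓝 a] fun z => (z - a) ^ n := by
  obtain ⟨R, rfl⟩ := X_sub_C_pow_dvd_of_iterate_derivative_eval_eq_zero hP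
  simpa using (isBigO_refl (fun z : 𝕜 => (z - a) ^ n) (𝓝 a)).mul
    (R.continuous.continuousAt.isBigO_one (F := 𝕜))

lemma isLittleO_rpow_rpow_nhdsGT_zero {r s : ℝ} (hrs : r < s) :
    (fun t : ℝ => t ^ s) =o[𝓝[>] 0] fun t => t ^ r := by
  have hlim : Tendsto (fun t : ℝ => t ^ (s - r)) (𝓝[>] 0) (𝓝 0) := by
    simpa [Real.zero_rpow (sub_pos.2 hrs).ne'] using
      (Real.continuousAt_rpow_const 0 (s - r) (.inr (sub_pos.2 hrs).le)).tendsto.mono_left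
        nhdsWithin_le_nhds
  refine (isLittleO_iff_tendsto' ?_).2 (hlim.congr' ?_) <;>
    filter_upwards [self_mem_nhdsWithin] with t ht
  · exact fun h0 => absurd h0 (Real.rpow_pos_of_pos ht r).ne'
  · exact Real.rpow_sub ht s r

lemma isLittleO_eval_sub_mul_I {Q : ℂ[X]} {a : ℂ} {n : ℕ} {r : ℝ} (hr : r < n)
    (hQ : ∀ j < n, (derivative^[j] Q).eval a = 0) :
    (fun t : ℝ => Q.eval (a - t * I)) =o[𝓝[>] 0] fun t => t ^ r := by
  have hpath : Tendsto (fun t : ℝ => a - t * I) (𝓝[>] 0) (𝓝 a) := by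
    have hcont : Continuous fun t : ℝ => a - t * I := by fun_prop
    simpa using (hcont.tendsto 0).mono_left nhdsWithin_le_nhds
  refine IsBigO.trans_isLittleO ?_ (isLittleO_rpow_rpow_nhdsGT_zero hr)
  refine ((isBigO_eval_of_iterate_derivative_eval_eq_zero hQ).comp_tendsto hpath).trans ?_
  exact IsBigO.of_bound 1 (.of_forall fun t => by simp)

lemma eval_map_ofRealHom (P : ℝ[X]) (x : ℝ) : (P.map ofRealHom).eval (x : ℂ) = P.eval x :=
  eval_map_apply ofRealHom x

lemma isLittleO_eval_map_ofRealHom_sub_mul_I {P : ℝ[X]} {a r : ℝ} {n : ℕ} (hr : r < n)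
    (hP : ∀ j < n, (derivative^[j] P).eval a = 0) :
    (fun t : ℝ => (P.map ofRealHom).eval (a - t * I)) =o[𝓝[>] 0] fun t => t ^ r :=
  isLittleO_eval_sub_mul_I hr fun j hj => by
    rw [iterate_derivative_map, eval_map_ofRealHom, hP j hj, ofReal_zero]

end Polynomial

end OscillatoryIntegral

open OscillatoryIntegral Complex Set Asymptotics in
theorem oscillatory_integral_asymptotics_general {E : Type*} [NormedAddCommGroup E]
    [NormedSpace ℂ E] [CompleteSpace E] {β ε η : ℝ} (hβ : 1 < β) (hε : 0 < ε) (hη : 0 < η)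
    {f : ℂ → E} (hf : DiffContOnCl ℂ f (Ioo 0 ε ×ℂ Ioo (-η) 0))
    (hfε : (fun t : ℝ => f (ε - t * I)) =o[𝓝[>] 0] fun t => t ^ (β - 1)) :
    Tendsto (fun k : ℝ => ((k ^ β : ℝ) : ℂ) •
        ∫ x in (0 : ℝ)..ε, (exp (-I * k * x) * ((x ^ (β - 1) : ℝ) : ℂ)) • f x) atTop
      (𝓝 ((exp (-I * Real.pi * β / 2) * (Real.Gamma β : ℂ)) • f 0)) := by
  have hg : DiffContOnCl ℂ (fun z => z ^ (β - 1 : ℂ) • f z) (Ioo 0 ε ×ℂ Ioo (-η) 0) :=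
    ((diffContOnCl_cpow_const (by simpa using hβ)).mono fun z hz => hz.1.1).smul hf
  have hf0 : Tendsto (fun t : ℝ => f (-(t * I))) (𝓝[>] 0) (𝓝 (f 0)) := by
    have hcont := continuousOn_sub_mul_I_of_diffContOnCl hε hη hf (left_mem_Icc.2 hε.le)
    rw [← nhdsWithin_Ioc_eq_nhdsGT hη]
    simpa using (hcont 0 (left_mem_Icc.2 hη.le)).tendsto.mono_left
      (nhdsWithin_mono 0 Ioc_subset_Icc_self)
  have hlim := tendsto_rpow_smul_integral_exp_smul_sub_endpoints (zero_lt_one.trans hβ) hε hη hg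
    (by simpa using tendsto_rpow_smul_cpow_smul_neg_mul_I hf0)
    (tendsto_rpow_smul_cpow_smul_sub_mul_I hε hfε _)
  have hconst : -I * (-I) ^ (β - 1 : ℂ) = exp (-I * Real.pi * β / 2) := by
    have hI : -I ≠ 0 := neg_ne_zero.2 I_ne_zero
    rw [cpow_sub _ _ hI, cpow_one, mul_div_cancel₀ _ hI, neg_I_cpow]
  rw [← tendsto_sub_nhds_zero_iff]
  refine hlim.congr fun k => ?_
  congr 1
  · rw [coe_smul]
    congr 1
    refine intervalIntegral.integral_congr fun x hx => ?_
    rw [uIcc_of_le hε.le] at hx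
    simp only [smul_smul, ofReal_cpow hx.1, ofReal_sub, ofReal_one]
  · rw [← hconst]
    simp only [smul_zero, zero_sub, ofReal_zero, mul_zero, exp_zero, mul_one, ← coe_smul, smul_smul,
      ← neg_smul]
    congr 1
    ring

/-- for non-integer `β > 1` and a polynomial `P` with `P(0) = 1` and
`P^{(j)}(ε) = 0` for `j = 0, …, m` (`m > β`),
`k^β ∫_0^ε e^{−ikx} x^{β−1} P(x) dx → e^{−iπβ/2} Γ(β)` as `k → ∞`. -/
theorem oscillatory_integral_asymptotics
    (β ε : ℝ) (hβ : 1 < β) (hβnotint : ∀ n : ℤ, β ≠ (n : ℝ)) (hε : 0 < ε)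
    (m : ℕ) (hm : β < (m : ℝ))
    (P : Polynomial ℝ) (hP0 : P.eval 0 = 1)
    (hPder : ∀ j : ℕ, j ≤ m → ((⇑Polynomial.derivative)^[j] P).eval ε = 0) :
    Tendsto (fun k : ℝ => ((k ^ β : ℝ) : ℂ) *
        ∫ x in (0:ℝ)..ε,
          Complex.exp (-Complex.I * (k:ℂ) * (x:ℂ)) * ((x ^ (β-1) : ℝ) : ℂ) * ((P.eval x : ℝ) : ℂ))
      atTop
      (𝓝 (Complex.exp (-Complex.I * (Real.pi : ℂ) * (β : ℂ) / 2) * ((Real.Gamma β : ℝ) : ℂ))) := by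
  simpa [OscillatoryIntegral.eval_map_ofRealHom, hP0]
    using oscillatory_integral_asymptotics_general hβ hε one_pos
      (P.map Complex.ofRealHom).differentiable.diffContOnCl
      (OscillatoryIntegral.isLittleO_eval_map_ofRealHom_sub_mul_I (by linarith)
        fun j hj => hPder j hj.le)
end
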